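/- The conditional independence implication problem is undecidable: there is no algorithm that, given k, l ∈ ℤ>0 and sets U_i, V_i, W_i ⊆ {1,…,k} for i = 0,…,l with U_i ∩ V_i = U_i ∩ W_i = V_i ∩ W_i = ∅, decides whether the implication (⋀_{i=1}^{l} X_{U_i} ⟂ X_{V_i} | X_{W_i}) → X_{U_0} ⟂ X_{V_0} | X_{W_0} holds for all jointly-distributed random variables X_1,…,X_k with finite support. -/

import Mathlib

open scoped Classical

noncomputable section

/-- The probability of the event `S` under the probability mass function `p`. -/
def Pr {Ω : Type} (p : Ω → ℝ) (S : Set Ω) : ℝ := ∑' ω : S, p ω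

/-- `p` is a probability mass function on the sample space `Ω`. -/
def IsProb {Ω : Type} (p : Ω → ℝ) : Prop := (∀ ω, 0 ≤ p ω) ∧ Pr p Set.univ = 1

/-- The support of a random variable `X`: the set of values attained with positive
probability. -/
def supp {Ω α : Type} (p : Ω → ℝ) (X : Ω → α) : Set α := {a | 0 < Pr p {ω | X ω = a}}

/-- `X` is almost surely a function of `Y` (written `X ≤ι Y` in the paper). -/
def FuncOf {Ω α β : Type} (p : Ω → ℝ) (X : Ω → α) (Y : Ω → β) : Prop :=
  ∃ f : β → α, Pr p {ω | X ω = f (Y ω)} = 1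

/-- The random variables `X` and `Y` are independent. -/
def IndepRV {Ω α β : Type} (p : Ω → ℝ) (X : Ω → α) (Y : Ω → β) : Prop :=
  ∀ (a : α) (b : β), Pr p {ω | X ω = a ∧ Y ω = b} = Pr p {ω | X ω = a} * Pr p {ω | Y ω = b}

/-- The random variables `X`, `Y`, `Z` are mutually independent:
`X ⟂ Y` and `(X, Y) ⟂ Z`. -/
def Indep3 {Ω α β γ : Type} (p : Ω → ℝ) (X : Ω → α) (Y : Ω → β) (Z : Ω → γ) : Prop :=
  IndepRV p X Y ∧ IndepRV p (fun ω => (X ω, Y ω)) Z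

/-- The predicate `tri(X, Y, Z)`: each variable is a.s. a function of the other two, and the
three variables are pairwise independent. -/
def tri {Ω α β γ : Type} (p : Ω → ℝ) (X : Ω → α) (Y : Ω → β) (Z : Ω → γ) : Prop :=
  FuncOf p X (fun ω => (Y ω, Z ω)) ∧ FuncOf p Y (fun ω => (X ω, Z ω)) ∧
    FuncOf p Z (fun ω => (X ω, Y ω)) ∧
    IndepRV p X Y ∧ IndepRV p X Z ∧ IndepRV p Y Z


/-- The event that `X i = v i` for every index `i` in the list `S`. -/
def PatEvent {Ω : Type} {V : ℕ → Type} (X : ∀ i, Ω → V i) (S : List ℕ)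
    (v : ∀ i, V i) : Set Ω :=
  {ω | ∀ i ∈ S, X i ω = v i}

/-- Conditional independence `X_U ⟂ X_V | X_W` of the joint random variables determined by
the index lists `U, V, W`, stated in the standard form for finitely-valued random
variables: for every assignment `v` of values,
`P(X_{U∪V∪W} = v) · P(X_W = v) = P(X_{U∪W} = v) · P(X_{V∪W} = v)`. -/
def CondIndep {Ω : Type} (p : Ω → ℝ) {V : ℕ → Type} (X : ∀ i, Ω → V i)
    (U Vl W : List ℕ) : Prop :=
  ∀ v : ∀ i, V i,
    Pr p (PatEvent X (U ++ Vl ++ W) v) * Pr p (PatEvent X W v) =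
      Pr p (PatEvent X (U ++ W) v) * Pr p (PatEvent X (Vl ++ W) v)

/-- An instance of the conditional independence implication problem: `(k, t, cs)` where
`k` is the number of random variables, `t = (U₀, V₀, W₀)` is the target conditional
independence statement, and `cs` is the list `(Uᵢ, Vᵢ, Wᵢ)` for `i = 1,…,l` of hypothesis
statements. Index sets `U, V, W ⊆ {1,…,k}` are encoded as lists of naturals. -/
abbrev CIInstance : Type :=
  ℕ × (List ℕ × List ℕ × List ℕ) × List (List ℕ × List ℕ × List ℕ)

/-- The instance is valid: `k ≥ 1`, `l ≥ 1`, all index sets are contained in `{1,…,k}`,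
and within each statement the three index sets are pairwise disjoint. -/
def CIValid : CIInstance → Prop := fun inst =>
  match inst with
  | (k, t, cs) =>
    1 ≤ k ∧ 1 ≤ cs.length ∧
    ∀ s ∈ t :: cs,
      (∀ i ∈ s.1 ++ s.2.1 ++ s.2.2, 1 ≤ i ∧ i ≤ k) ∧
      (∀ i, ¬(i ∈ s.1 ∧ i ∈ s.2.1)) ∧
      (∀ i, ¬(i ∈ s.1 ∧ i ∈ s.2.2)) ∧
      (∀ i, ¬(i ∈ s.2.1 ∧ i ∈ s.2.2))

/-- The implication `(⋀_{i=1}^{l} X_{Uᵢ} ⟂ X_{Vᵢ} | X_{Wᵢ}) → X_{U₀} ⟂ X_{V₀} | X_{W₀}`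
holds for all jointly-distributed random variables `X_1, …, X_k` with finite support. -/
def CIHolds : CIInstance → Prop := fun inst =>
  match inst with
  | (_, t, cs) =>
    ∀ (Ω : Type) (p : Ω → ℝ), IsProb p →
      ∀ (V : ℕ → Type) (X : ∀ i, Ω → V i), (∀ i, (supp p (X i)).Finite) →
        (∀ s ∈ cs, CondIndep p X s.1 s.2.1 s.2.2) →
        CondIndep p X t.1 t.2.1 t.2.2


/-! ### Basic facts on probabilities -/

theorem Pr_eq_ind {Ω : Type} (p : Ω → ℝ) (S : Set Ω) : Pr p S = ∑' ω, S.indicator p ω := by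
  unfold Pr; exact tsum_subtype S p

theorem IsProb.tsum_eq {Ω : Type} {p : Ω → ℝ} (h : IsProb p) : ∑' ω, p ω = 1 := by
  have := h.2
  rw [Pr_eq_ind] at this
  simpa using this

theorem IsProb.summable {Ω : Type} {p : Ω → ℝ} (h : IsProb p) : Summable p := by
  by_contra hc
  have := h.tsum_eq
  rw [tsum_eq_zero_of_not_summable hc] at this
  exact zero_ne_one this

theorem Pr_nonneg {Ω : Type} {p : Ω → ℝ} (h : IsProb p) (S : Set Ω) : 0 ≤ Pr p S := by
  rw [Pr_eq_ind]
  exact tsum_nonneg fun ω => Set.indicator_nonneg (fun a _ => h.1 a) ω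

theorem Pr_mono {Ω : Type} {p : Ω → ℝ} (h : IsProb p) {S T : Set Ω} (hST : S ⊆ T) :
    Pr p S ≤ Pr p T := by
  rw [Pr_eq_ind, Pr_eq_ind]
  refine Summable.tsum_le_tsum ?_ (h.summable.indicator S) (h.summable.indicator T)
  intro ω
  exact Set.indicator_le_indicator_of_subset hST (fun a => h.1 a) ω

theorem Pr_pos {Ω : Type} {p : Ω → ℝ} (h : IsProb p) {S : Set Ω} {ω : Ω} (hω : ω ∈ S)
    (hp : 0 < p ω) : 0 < Pr p S := by
  rw [Pr_eq_ind]
  refine (h.summable.indicator S).tsum_pos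
    (fun ω => Set.indicator_nonneg (fun a _ => h.1 a) ω) ω ?_
  simpa [hω] using hp

theorem exists_of_Pr_pos {Ω : Type} {p : Ω → ℝ} (h : IsProb p) {S : Set Ω} (hS : 0 < Pr p S) :
    ∃ ω ∈ S, 0 < p ω := by
  by_contra hc
  push Not at hc
  rw [Pr_eq_ind] at hS
  have : ∀ ω, S.indicator p ω = 0 := by
    intro ω
    by_cases hω : ω ∈ S
    · simp [hω, le_antisymm (hc ω hω) (h.1 ω)]
    · simp [hω]
  simp [this] at hS

/-- Decomposition of a probability along the values of a random variable. -/
theorem Pr_fiber {Ω α : Type} {p : Ω → ℝ} (h : IsProb p) (S : Set Ω) (Y : Ω → α) :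
    Pr p S = ∑' a, Pr p {ω | Y ω = a ∧ ω ∈ S} := by
  rw [Pr_eq_ind]
  have hs : Summable (fun ω => S.indicator p ω) := h.summable.indicator S
  have hs' := (Equiv.sigmaFiberEquiv Y).summable_iff.mpr hs
  rw [← (Equiv.sigmaFiberEquiv Y).tsum_eq]
  refine (Summable.tsum_sigma hs').trans ?_
  congr 1
  funext a
  rw [Pr_eq_ind]
  have h2 := tsum_subtype {x | Y x = a} (fun ω => S.indicator p ω)
  refine Eq.trans ?_ (h2.trans ?_)
  · rfl
  · congr 1
    funext ω
    by_cases h1 : Y ω = a <;> by_cases h2 : ω ∈ S <;> simp [h1, h2]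

/-- Conditional independence gives an exchange property on the support. -/
theorem CondIndep.exchange {Ω : Type} {p : Ω → ℝ} (hp : IsProb p) {V : ℕ → Type}
    {X : ∀ i, Ω → V i} {U Vl W : List ℕ} (h : CondIndep p X U Vl W)
    (hUV : ∀ i ∈ U, i ∉ Vl) {ω ω' : Ω} (hω : 0 < p ω) (hω' : 0 < p ω')
    (hW : ∀ i ∈ W, X i ω = X i ω') :
    ∃ ω'', 0 < p ω'' ∧ (∀ i ∈ U, X i ω'' = X i ω) ∧ (∀ i ∈ Vl, X i ω'' = X i ω') ∧
      (∀ i ∈ W, X i ω'' = X i ω) := by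
  have h1 := h (fun i => if i ∈ U then X i ω else X i ω')
  have a1 : 0 < Pr p (PatEvent X (U ++ W) (fun i => if i ∈ U then X i ω else X i ω')) := by
    refine Pr_pos hp (ω := ω) ?_ hω
    intro i hi
    by_cases hU : i ∈ U
    · simp [hU]
    · simp only [List.mem_append, hU, false_or] at hi
      simp [hU, hW i hi]
  have a2 : 0 < Pr p (PatEvent X (Vl ++ W) (fun i => if i ∈ U then X i ω else X i ω')) := by
    refine Pr_pos hp (ω := ω') ?_ hω'
    intro i hi
    by_cases hU : i ∈ U
    · have : i ∈ W := by
        rcases List.mem_append.mp hi with h | h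
        · exact absurd h (hUV i hU)
        · exact h
      simp [hU, hW i this]
    · simp [hU]
  have a3 : 0 < Pr p (PatEvent X (U ++ Vl ++ W) (fun i => if i ∈ U then X i ω else X i ω')) := by
    rcases (Pr_nonneg hp (PatEvent X (U ++ Vl ++ W)
      (fun i => if i ∈ U then X i ω else X i ω'))).lt_or_eq with h2 | h2
    · exact h2
    · rw [← h2, zero_mul] at h1
      exact absurd h1 (mul_pos a1 a2).ne
  obtain ⟨ω'', hm, hpos⟩ := exists_of_Pr_pos hp a3
  refine ⟨ω'', hpos, ?_, ?_, ?_⟩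
  · intro i hi
    have := hm i (by simp [hi])
    simpa [hi] using this
  · intro i hi
    have := hm i (by simp [hi])
    have hU : i ∉ U := fun hU => hUV i hU hi
    simpa [hU] using this
  · intro i hi
    have := hm i (by simp [hi])
    by_cases hU : i ∈ U
    · simpa [hU] using this
    · simpa [hU, hW i hi] using this

/-- Double Markov property: if the two copies `a`, `b` have connected support, then `a` is
independent of `y`. -/
theorem double_markov {Ω : Type} {p : Ω → ℝ} (hp : IsProb p) {V : ℕ → Type}
    {X : ∀ i, Ω → V i} {a b y : ℕ} (hay : a ≠ y) (hby : b ≠ y)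
    (h1 : CondIndep p X [a] [y] [b]) (h2 : CondIndep p X [b] [y] [a])
    (hconn : ∀ ω ω' : {ω // 0 < p ω}, Relation.EqvGen
      (fun ω ω' : {ω // 0 < p ω} => X a ω = X a ω' ∨ X b ω = X b ω') ω ω') :
    CondIndep p X [a] [y] [] := by
  intro v
  have hne : ∃ ω, 0 < p ω := by
    have : 0 < Pr p Set.univ := by rw [hp.2]; exact one_pos
    obtain ⟨ω, _, h⟩ := exists_of_Pr_pos hp this
    exact ⟨ω, h⟩
  obtain ⟨ω₀, hω₀⟩ := hne
  set Ya : V a → ℝ := fun r => Pr p {ω | X a ω = r ∧ X y ω = v y} with hYa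
  set Na : V a → ℝ := fun r => Pr p {ω | X a ω = r} with hNa
  set Yb : V b → ℝ := fun r => Pr p {ω | X b ω = r ∧ X y ω = v y} with hYb
  set Nb : V b → ℝ := fun r => Pr p {ω | X b ω = r} with hNb
  have key : ∀ ω : {ω // 0 < p ω}, Ya (X a ω) / Na (X a ω) = Yb (X b ω) / Nb (X b ω) := by
    intro ω
    let w : ∀ i, V i := fun i => if i = y then v i else X i ω
    have wa : w a = X a ω := by simp [w, hay]
    have wb : w b = X b ω := by simp [w, hby]
    have wy : w y = v y := by simp [w]
    have e1 := h1 w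
    have e2 := h2 w
    have s1 : PatEvent X ([a] ++ [y] ++ [b]) w =
        {ω' | X a ω' = X a ω ∧ X y ω' = v y ∧ X b ω' = X b ω} := by
      ext ω'; simp [PatEvent, wa, wb, wy]
    have s2 : PatEvent X ([b] ++ [y] ++ [a]) w =
        {ω' | X a ω' = X a ω ∧ X y ω' = v y ∧ X b ω' = X b ω} := by
      ext ω'; simp [PatEvent, wa, wb, wy]; tauto
    have s3 : PatEvent X ([a] ++ [b]) w = {ω' | X a ω' = X a ω ∧ X b ω' = X b ω} := by
      ext ω'; simp [PatEvent, wa, wb]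
    have s4 : PatEvent X ([b] ++ [a]) w = {ω' | X a ω' = X a ω ∧ X b ω' = X b ω} := by
      ext ω'; simp [PatEvent, wa, wb]; tauto
    have s5 : PatEvent X ([y] ++ [a]) w = {ω' | X a ω' = X a ω ∧ X y ω' = v y} := by
      ext ω'; simp [PatEvent, wa, wy]; tauto
    have s6 : PatEvent X ([y] ++ [b]) w = {ω' | X b ω' = X b ω ∧ X y ω' = v y} := by
      ext ω'; simp [PatEvent, wb, wy]; tauto
    have s7 : PatEvent X [a] w = {ω' | X a ω' = X a ω} := by
      ext ω'; simp [PatEvent, wa]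
    have s8 : PatEvent X [b] w = {ω' | X b ω' = X b ω} := by
      ext ω'; simp [PatEvent, wb]
    rw [s1, s8, s3, s6] at e1
    rw [s2, s7, s4, s5] at e2
    have pab : 0 < Pr p {ω' | X a ω' = X a ω ∧ X b ω' = X b ω} :=
      Pr_pos hp (ω := ω) ⟨rfl, rfl⟩ ω.2
    have pa : 0 < Na (X a ω) := Pr_pos hp (ω := ω.1) rfl ω.2
    have pb : 0 < Nb (X b ω) := Pr_pos hp (ω := ω.1) rfl ω.2
    rw [div_eq_div_iff pa.ne' pb.ne']
    apply mul_left_cancel₀ pab.ne'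
    simp only [hYa, hNa, hYb, hNb]
    linear_combination (- Pr p {ω' | X b ω' = X b ω}) * e2 + Pr p {ω' | X a ω' = X a ω} * e1
  obtain ⟨c, hc⟩ : ∃ c, ∀ ω : {ω // 0 < p ω}, Ya (X a ω) / Na (X a ω) = c := by
    let ω₁ : {ω // 0 < p ω} := ⟨ω₀, hω₀⟩
    refine ⟨Ya (X a ω₁) / Na (X a ω₁), fun ω => ?_⟩
    have := hconn ω ω₁
    generalize ω₁ = ω₂ at this
    induction this with
    | rel x y h =>
      rcases h with h | h
      · rw [h]
      · rw [key, key, h]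
    | refl x => rfl
    | symm x y _ ih => exact ih.symm
    | trans x y z _ _ ih1 ih2 => exact ih1.trans ih2
  have hall : ∀ r, Ya r = c * Na r := by
    intro r
    rcases (Pr_nonneg hp {ω | X a ω = r}).lt_or_eq with h | h
    · obtain ⟨ω, hω, hpω⟩ := exists_of_Pr_pos hp h
      have hω : X a ω = r := hω
      have := hc ⟨ω, hpω⟩
      simp only [hω] at this
      rw [div_eq_iff] at this
      · exact this
      · exact h.ne'
    · have h3 : Na r = 0 := h.symm
      have h4 : Ya r ≤ Na r := Pr_mono hp fun ω h => h.1
      have h5 : 0 ≤ Ya r := Pr_nonneg hp _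
      rw [h3] at h4 ⊢
      rw [mul_zero]
      exact le_antisymm h4 h5
  have hY : Pr p {ω | X y ω = v y} = c := by
    rw [Pr_fiber hp _ (X a)]
    have : ∀ r, Pr p {ω | X a ω = r ∧ ω ∈ {ω | X y ω = v y}} = c * Na r := fun r => hall r
    simp only [this]
    rw [tsum_mul_left]
    have h6 := Pr_fiber hp Set.univ (X a)
    simp only [Set.mem_univ, and_true] at h6
    rw [hp.2] at h6
    rw [show (∑' r, Na r) = 1 from h6.symm, mul_one]
  have t1 : PatEvent X ([a] ++ [y] ++ []) v = {ω | X a ω = v a ∧ X y ω = v y} := by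
    ext ω'; simp [PatEvent]
  have t2 : PatEvent X [] v = Set.univ := by
    ext ω'; simp [PatEvent]
  have t3 : PatEvent X ([a] ++ []) v = {ω | X a ω = v a} := by
    ext ω'; simp [PatEvent]
  have t4 : PatEvent X ([y] ++ []) v = {ω | X y ω = v y} := by
    ext ω'; simp [PatEvent]
  rw [t1, t2, t3, t4, hp.2, hY, mul_one]
  rw [show Pr p {ω | X a ω = v a ∧ X y ω = v y} = c * Na (v a) from hall (v a)]
  exact mul_comm _ _

/-! ### The instance attached to a presentation

A presentation consists of generators `0, …, m-1` (with `0` the identity), a list of triples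
`(k, g, h)` meaning `k = g ∘ h`, and two generators `u`, `s`. -/

/-- First copy of the base variable `i`. -/
def cA (i : ℕ) : ℕ := 2 * i + 1
/-- Second copy of the base variable `i`. -/
def cB (i : ℕ) : ℕ := 2 * i + 2
/-- The variable coding generator `g` as a map from the values of `X₁` to those of `X₂`. -/
def zP (g : ℕ) : ℕ := 4 + 3 * g
/-- The variable coding generator `g` as a map from the values of `X₁` to those of `X₃`. -/
def zQ (g : ℕ) : ℕ := 5 + 3 * g
/-- The variable coding generator `g` as a map from the values of `X₂` to those of `X₃`. -/
def zR (g : ℕ) : ℕ := 6 + 3 * g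

/-- A conditional independence statement. -/
abbrev CIS : Type := List ℕ × List ℕ × List ℕ

/-- All copies of all base variables other than `i`. -/
def restOf (N i : ℕ) : List ℕ :=
  (List.range N).flatMap (fun j => if j = i then [] else [cA j, cB j])

/-- `z` is a function of `a` and `b`. -/
def cFD (z a b : ℕ) : CIS := ([cA z], [cB z], [cA a, cA b])

/-- `a` and `b` are independent. -/
def cIND (a b : ℕ) : CIS := ([cA a], [cA b], [])

/-- The statement for the relation `k = g ∘ h`. -/
def cREL (t : ℕ × ℕ × ℕ) : CIS := cFD (zQ t.1) (zP t.2.2) (zR t.2.1)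

/-- Statements that the two copies of `i` are equivalent. -/
def cCOPY (N i : ℕ) : List CIS := [([cA i], restOf N i, [cB i]), ([cB i], restOf N i, [cA i])]

/-- Statements for the generator `g`. -/
def cGEN (g : ℕ) : List CIS :=
  [cFD (zP g) 0 1, cFD 1 0 (zP g), cIND (zP g) 0,
   cFD (zQ g) 0 2, cFD 2 0 (zQ g), cIND (zQ g) 0,
   cFD (zR g) 1 2, cFD 2 1 (zR g), cIND (zR g) 1,
   cREL (g, g, 0), cREL (g, 0, g)]

/-- The fixed part of the statements. -/
def cFIX (u s : ℕ) : List CIS :=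
  [([cA 0], [cA 1, cA 2], []), cIND 1 2, cFD 1 (zR 0) 2, cIND (zP 0) 1, cFD 0 (zP 0) 1,
   cFD 3 0 0, cFD 3 (zP u) (zP s), ([cA 3], [cA 0], [cB 3]), ([cB 3], [cA 0], [cA 3])]

/-- The hypotheses of the instance. -/
def cHYP (m u s : ℕ) (R : List (ℕ × ℕ × ℕ)) : List CIS :=
  cFIX u s ++ (List.range (4 + 3 * m)).flatMap (cCOPY (4 + 3 * m)) ++
    (List.range m).flatMap cGEN ++ R.map cREL

/-- The instance. -/
def cINST (m u s : ℕ) (R : List (ℕ × ℕ × ℕ)) : CIInstance :=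
  (2 * (4 + 3 * m), cIND 3 0, cHYP m u s R)

theorem mem_restOf {N i x : ℕ} :
    x ∈ restOf N i ↔ ∃ j < N, j ≠ i ∧ (x = cA j ∨ x = cB j) := by
  simp only [restOf, List.mem_flatMap, List.mem_range]
  constructor
  · rintro ⟨j, hj, hx⟩
    by_cases h : j = i
    · simp [h] at hx
    · simp [h] at hx
      exact ⟨j, hj, h, hx⟩
  · rintro ⟨j, hj, h, hx⟩
    exact ⟨j, hj, by simpa [h] using hx⟩

/-- A single statement of the instance is valid. -/
def CISValid (k : ℕ) (s : CIS) : Prop :=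
  (∀ i ∈ s.1 ++ s.2.1 ++ s.2.2, 1 ≤ i ∧ i ≤ k) ∧
      (∀ i, ¬(i ∈ s.1 ∧ i ∈ s.2.1)) ∧
      (∀ i, ¬(i ∈ s.1 ∧ i ∈ s.2.2)) ∧
      (∀ i, ¬(i ∈ s.2.1 ∧ i ∈ s.2.2))

theorem cFD_valid {N z a b : ℕ} (hz : z < N) (ha : a < N) (hb : b < N) (hza : z ≠ a)
    (hzb : z ≠ b) : CISValid (2 * N) (cFD z a b) := by
  refine ⟨?_, ?_, ?_, ?_⟩ <;> simp [cFD, cA, cB] <;> grind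

theorem cIND_valid {N a b : ℕ} (ha : a < N) (hb : b < N) (hab : a ≠ b) :
    CISValid (2 * N) (cIND a b) := by
  refine ⟨?_, ?_, ?_, ?_⟩ <;> simp [cIND, cA] <;> grind

theorem cCOPY_valid {N i : ℕ} (hi : i < N) : ∀ s ∈ cCOPY N i, CISValid (2 * N) s := by
  intro s hs
  simp only [cCOPY, List.mem_cons, List.not_mem_nil, or_false] at hs
  rcases hs with rfl | rfl <;> refine ⟨?_, ?_, ?_, ?_⟩ <;>
    simp only [List.mem_append, List.mem_singleton, mem_restOf] <;> simp only [cA, cB] <;> grind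

theorem cREL_valid {m : ℕ} {t : ℕ × ℕ × ℕ} (h : t.1 < m ∧ t.2.1 < m ∧ t.2.2 < m) :
    CISValid (2 * (4 + 3 * m)) (cREL t) := by
  obtain ⟨h1, h2, h3⟩ := h
  apply cFD_valid <;> simp only [zP, zQ, zR] <;> omega

theorem cINST_valid {m u s : ℕ} {R : List (ℕ × ℕ × ℕ)} (hu : u < m) (hs : s < m)
    (hR : ∀ t ∈ R, t.1 < m ∧ t.2.1 < m ∧ t.2.2 < m) : CIValid (cINST m u s R) := by
  have hm : 0 < m := by omega
  refine ⟨by omega, by simp [cHYP, cFIX], ?_⟩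
  intro c hc
  change CISValid (2 * (4 + 3 * m)) c
  simp only [cHYP, List.mem_cons, List.mem_append, List.mem_flatMap, List.mem_range,
    List.mem_map] at hc
  rcases hc with rfl | ((hc | ⟨i, hi, hc⟩) | ⟨g, hg, hc⟩) | ⟨t, ht, rfl⟩
  · exact cIND_valid (by omega) (by omega) (by omega)
  · simp only [cFIX, List.mem_cons, List.not_mem_nil, or_false] at hc
    rcases hc with rfl | rfl | rfl | rfl | rfl | rfl | rfl | rfl | rfl
    · refine ⟨?_, ?_, ?_, ?_⟩ <;> simp [cA] <;> grind
    · exact cIND_valid (by omega) (by omega) (by omega)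
    · apply cFD_valid <;> (try simp only [zR]) <;> omega
    · apply cIND_valid <;> (try simp only [zP]) <;> omega
    · apply cFD_valid <;> (try simp only [zP]) <;> omega
    · apply cFD_valid <;> omega
    · apply cFD_valid <;> (try simp only [zP]) <;> omega
    · refine ⟨?_, ?_, ?_, ?_⟩ <;> simp [cA, cB] <;> grind
    · refine ⟨?_, ?_, ?_, ?_⟩ <;> simp [cA, cB] <;> grind
  · exact cCOPY_valid hi c hc
  · simp only [cGEN, List.mem_cons, List.not_mem_nil, or_false] at hc
    rcases hc with rfl | rfl | rfl | rfl | rfl | rfl | rfl | rfl | rfl | rfl | rfl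
    · apply cFD_valid <;> (try simp only [zP]) <;> omega
    · apply cFD_valid <;> (try simp only [zP]) <;> omega
    · apply cIND_valid <;> (try simp only [zP]) <;> omega
    · apply cFD_valid <;> (try simp only [zQ]) <;> omega
    · apply cFD_valid <;> (try simp only [zQ]) <;> omega
    · apply cIND_valid <;> (try simp only [zQ]) <;> omega
    · apply cFD_valid <;> (try simp only [zR]) <;> omega
    · apply cFD_valid <;> (try simp only [zR]) <;> omega
    · apply cIND_valid <;> (try simp only [zR]) <;> omega
    · exact cREL_valid ⟨hg, hg, hm⟩
    · exact cREL_valid ⟨hg, hm, hg⟩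
  · exact cREL_valid (hR t ht)

/-! ### Soundness on the level of supports -/

/-- `g` is a model of the relations `R`. -/
def IsModel {V : Type} (R : List (ℕ × ℕ × ℕ)) (g : ℕ → V → V) : Prop :=
  (∀ x, g 0 x = x) ∧ ∀ t ∈ R, ∀ x, g t.1 x = g t.2.1 (g t.2.2 x)

/-- The combinatorial content of the hypotheses of the instance. -/
theorem sound_abs {S : Type} {Q : ℕ → Type} (K : ∀ i, S → Q i) {m u s : ℕ}
    {R : List (ℕ × ℕ × ℕ)} (hu : u < m) (hs : s < m)
    (hR : ∀ t ∈ R, t.1 < m ∧ t.2.1 < m ∧ t.2.2 < m)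
    (hmodel : ∀ (V : Type) (g : ℕ → V → V), IsModel R g → g u = g s)
    (hfd : ∀ z a b, cFD z a b ∈ cHYP m u s R → ∀ ω ω', K a ω = K a ω' → K b ω = K b ω' →
      K z ω = K z ω')
    (hind : ∀ a b, cIND a b ∈ cHYP m u s R → ∀ ω ω', ∃ ω'', K a ω'' = K a ω ∧ K b ω'' = K b ω')
    (hind3 : ∀ ω ω' ω'', ∃ η, K 0 η = K 0 ω ∧ K 1 η = K 1 ω' ∧ K 2 η = K 2 ω'')
    (hsurj : ∀ x : Q 0, ∃ ω, K 0 ω = x) :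
    ∀ ω ω', K 3 ω = K 3 ω' := by
  have hm : 0 < m := by omega
  have memG : ∀ g < m, ∀ c ∈ cGEN g, c ∈ cHYP m u s R := by
    intro g hg c hc
    simp only [cHYP, List.mem_append, List.mem_flatMap, List.mem_range]
    exact Or.inl (Or.inr ⟨g, hg, hc⟩)
  have memF : ∀ c ∈ cFIX u s, c ∈ cHYP m u s R := by
    intro c hc
    simp only [cHYP, List.mem_append]
    exact Or.inl (Or.inl (Or.inl hc))
  have memR : ∀ t ∈ R, cREL t ∈ cHYP m u s R := by
    intro t ht
    simp only [cHYP, List.mem_append, List.mem_map]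
    exact Or.inr ⟨t, ht, rfl⟩
  -- the generator facts
  have P1 : ∀ g < m, ∀ ω ω', K 0 ω = K 0 ω' → K 1 ω = K 1 ω' → K (zP g) ω = K (zP g) ω' :=
    fun g hg => hfd _ _ _ (memG g hg _ (by simp [cGEN]))
  have P2 : ∀ g < m, ∀ ω ω', K 0 ω = K 0 ω' → K (zP g) ω = K (zP g) ω' → K 1 ω = K 1 ω' :=
    fun g hg => hfd _ _ _ (memG g hg _ (by simp [cGEN]))
  have P3 : ∀ g < m, ∀ ω ω', ∃ ω'', K (zP g) ω'' = K (zP g) ω ∧ K 0 ω'' = K 0 ω' :=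
    fun g hg => hind _ _ (memG g hg _ (by simp [cGEN]))
  have Q2 : ∀ g < m, ∀ ω ω', K 0 ω = K 0 ω' → K (zQ g) ω = K (zQ g) ω' → K 2 ω = K 2 ω' :=
    fun g hg => hfd _ _ _ (memG g hg _ (by simp [cGEN]))
  have R1 : ∀ g < m, ∀ ω ω', K 1 ω = K 1 ω' → K 2 ω = K 2 ω' → K (zR g) ω = K (zR g) ω' :=
    fun g hg => hfd _ _ _ (memG g hg _ (by simp [cGEN]))
  have R2 : ∀ g < m, ∀ ω ω', K 1 ω = K 1 ω' → K (zR g) ω = K (zR g) ω' → K 2 ω = K 2 ω' :=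
    fun g hg => hfd _ _ _ (memG g hg _ (by simp [cGEN]))
  have R3 : ∀ g < m, ∀ ω ω', ∃ ω'', K (zR g) ω'' = K (zR g) ω ∧ K 1 ω'' = K 1 ω' :=
    fun g hg => hind _ _ (memG g hg _ (by simp [cGEN]))
  have L1 : ∀ g < m, ∀ ω ω', K (zP 0) ω = K (zP 0) ω' → K (zR g) ω = K (zR g) ω' →
      K (zQ g) ω = K (zQ g) ω' :=
    fun g hg => hfd _ _ _ (memG g hg _ (by simp [cGEN, cREL]))
  have L2 : ∀ g < m, ∀ ω ω', K (zP g) ω = K (zP g) ω' → K (zR 0) ω = K (zR 0) ω' →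
      K (zQ g) ω = K (zQ g) ω' :=
    fun g hg => hfd _ _ _ (memG g hg _ (by simp [cGEN, cREL]))
  have L3 : ∀ t ∈ R, ∀ ω ω', K (zP t.2.2) ω = K (zP t.2.2) ω' →
      K (zR t.2.1) ω = K (zR t.2.1) ω' → K (zQ t.1) ω = K (zQ t.1) ω' :=
    fun t ht => hfd _ _ _ (memR t ht)
  have F1 : ∀ ω ω', K (zR 0) ω = K (zR 0) ω' → K 2 ω = K 2 ω' → K 1 ω = K 1 ω' :=
    hfd _ _ _ (memF _ (by simp [cFIX]))
  have F2 : ∀ ω ω', ∃ ω'', K (zP 0) ω'' = K (zP 0) ω ∧ K 1 ω'' = K 1 ω' :=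
    hind _ _ (memF _ (by simp [cFIX]))
  have F3 : ∀ ω ω', K (zP 0) ω = K (zP 0) ω' → K 1 ω = K 1 ω' → K 0 ω = K 0 ω' :=
    hfd _ _ _ (memF _ (by simp [cFIX]))
  have F4 : ∀ ω ω', K 0 ω = K 0 ω' → K 0 ω = K 0 ω' → K 3 ω = K 3 ω' :=
    hfd _ _ _ (memF _ (by simp [cFIX]))
  have F5 : ∀ ω ω', K (zP u) ω = K (zP u) ω' → K (zP s) ω = K (zP s) ω' → K 3 ω = K 3 ω' :=
    hfd _ _ _ (memF _ (by simp [cFIX]))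
  -- the maps relative to a base point
  have main : ∀ ω₀ ω, K (zP s) ω = K (zP s) ω₀ → K (zP u) ω = K (zP u) ω₀ := by
    intro ω₀
    -- graph of the generator `g` as a relation on `Q 0`
    let T : ℕ → Q 0 → Q 0 → Prop := fun g x y => ∃ ω ω', K (zP g) ω = K (zP g) ω₀ ∧
      K 0 ω = x ∧ K 1 ω = K 1 ω' ∧ K (zP 0) ω' = K (zP 0) ω₀ ∧ K 0 ω' = y
    have Tex : ∀ g < m, ∀ x, ∃ y, T g x y := by
      intro g hg x
      obtain ⟨ξ, hξ⟩ := hsurj x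
      obtain ⟨ω, h1, h2⟩ := P3 g hg ω₀ ξ
      obtain ⟨ω', h3, h4⟩ := F2 ω₀ ω
      exact ⟨_, ω, ω', h1, h2.trans hξ, h4.symm, h3, rfl⟩
    have Tun : ∀ g < m, ∀ x y y', T g x y → T g x y' → y = y' := by
      rintro g hg x y y' ⟨ω, ω', h1, h2, h3, h4, h5⟩ ⟨η, η', k1, k2, k3, k4, k5⟩
      have e1 : K 1 ω = K 1 η := P2 g hg ω η (h2.trans k2.symm) (h1.trans k1.symm)
      have e2 : K 0 ω' = K 0 η' := F3 ω' η' (h4.trans k4.symm) (h3.symm.trans (e1.trans k3))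
      exact h5.symm.trans (e2.trans k5)
    let G : ℕ → Q 0 → Q 0 := fun g x => if h : g < m then (Tex g h x).choose else x
    have hG : ∀ g < m, ∀ x, T g x (G g x) := by
      intro g hg x
      have := (Tex g hg x).choose_spec
      simpa [G, hg] using this
    have hGe : ∀ g < m, ∀ x y, T g x y → G g x = y :=
      fun g hg x y h => Tun g hg x _ _ (hG g hg x) h
    have hmod : IsModel R G := by
      constructor
      · intro x
        apply hGe 0 hm
        obtain ⟨ξ, hξ⟩ := hsurj x
        obtain ⟨ω, h1, h2⟩ := P3 0 hm ω₀ ξ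
        exact ⟨ω, ω, h1, h2.trans hξ, rfl, h1, h2.trans hξ⟩
      · rintro ⟨k, g, h⟩ ht x
        obtain ⟨hk, hg, hh⟩ := hR _ ht
        simp only at hk hg hh ⊢
        apply hGe k hk
        obtain ⟨a, a', a1, a2, a3, a4, a5⟩ := hG h hh x
        obtain ⟨b, b', b1, b2, b3, b4, b5⟩ := hG g hg (G h x)
        -- `c` is the value of `X₃` for the composite
        obtain ⟨c, c1, c2⟩ := R3 0 hm ω₀ b
        -- the point `(G h x, b, c)` shows the value of `zR g`
        obtain ⟨d, d1, d2, d3⟩ := hind3 a' b c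
        have d4 : K (zP g) d = K (zP g) ω₀ :=
          (P1 g hg d b (d1.trans (a5.trans b2.symm)) d2).trans b1
        have d5 : K (zR 0) d = K (zR 0) ω₀ := (R1 0 hm d c (d2.trans c2.symm) d3).trans c1
        have d6 : K (zQ g) d = K (zQ g) ω₀ := L2 g hg d ω₀ d4 d5
        have e : ∃ e, K (zR g) e = K (zR g) ω₀ ∧ K 1 e = K 1 a := R3 g hg ω₀ a
        obtain ⟨e, e1, e2⟩ := e
        obtain ⟨f, f1, f2, f3⟩ := hind3 a' a e
        have f4 : K (zP 0) f = K (zP 0) ω₀ := (P1 0 hm f a' f1 (f2.trans a3)).trans a4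
        have f5 : K (zR g) f = K (zR g) ω₀ := (R1 g hg f e (f2.trans e2.symm) f3).trans e1
        have f6 : K (zQ g) f = K (zQ g) ω₀ := L1 g hg f ω₀ f4 f5
        have ec : K 2 e = K 2 c :=
          f3.symm.trans ((Q2 g hg f d (f1.trans d1.symm) (f6.trans d6.symm)).trans d3)
        -- composite
        obtain ⟨i, i1, i2, i3⟩ := hind3 a a e
        have i4 : K (zP h) i = K (zP h) ω₀ := (P1 h hh i a i1 i2).trans a1
        have i5 : K (zR g) i = K (zR g) ω₀ := (R1 g hg i e (i2.trans e2.symm) i3).trans e1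
        have i6 : K (zQ k) i = K (zQ k) ω₀ := L3 _ ht i ω₀ i4 i5
        -- the graph of `k`
        obtain ⟨j, j1, j2⟩ := P3 k hk ω₀ a
        obtain ⟨l, l1, l2⟩ := R3 0 hm ω₀ j
        obtain ⟨n, n1, n2, n3⟩ := hind3 a j l
        have n4 : K (zP k) n = K (zP k) ω₀ := (P1 k hk n j (n1.trans j2.symm) n2).trans j1
        have n5 : K (zR 0) n = K (zR 0) ω₀ := (R1 0 hm n l (n2.trans l2.symm) n3).trans l1
        have n6 : K (zQ k) n = K (zQ k) ω₀ := L2 k hk n ω₀ n4 n5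
        have el : K 2 l = K 2 e :=
          n3.symm.trans ((Q2 k hk n i (n1.trans i1.symm) (n6.trans i6.symm)).trans i3)
        have jb : K 1 l = K 1 c := F1 l c (l1.trans c1.symm) (el.trans ec)
        refine ⟨j, b', j1, j2.trans a2, ?_, b4, b5⟩
        exact l2.symm.trans (jb.trans (c2.trans b3))
    have hus := hmodel _ G hmod
    intro ω hω
    obtain ⟨ω', w1, w2⟩ := F2 ω₀ ω
    have t1 : T s (K 0 ω) (K 0 ω') := ⟨ω, ω', hω, rfl, w2.symm, w1, rfl⟩
    have t2 : T u (K 0 ω) (K 0 ω') := by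
      have h1 := hGe s hs _ _ t1
      rw [← hus] at h1
      rw [← h1]
      exact hG u hu _
    obtain ⟨η, η', y1, y2, y3, y4, y5⟩ := t2
    have z1 : K 1 η' = K 1 ω' := P2 0 hm η' ω' y5 (y4.trans w1.symm)
    have z2 : K 1 η = K 1 ω := y3.trans (z1.trans w2)
    exact (P1 u hu ω η y2.symm z2.symm).trans y1
  intro ω ω'
  obtain ⟨η, h1, h2⟩ := P3 s hs ω' ω
  have h3 : K 3 η = K 3 ω' := F5 η ω' (main ω' η h1) h1
  exact (F4 ω η h2.symm h2.symm).trans h3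

theorem mem_restOf_A {N i j : ℕ} (hj : j < N) (h : j ≠ i) : cA j ∈ restOf N i :=
  mem_restOf.mpr ⟨j, hj, h, Or.inl rfl⟩

theorem mem_restOf_B {N i j : ℕ} (hj : j < N) (h : j ≠ i) : cB j ∈ restOf N i :=
  mem_restOf.mpr ⟨j, hj, h, Or.inr rfl⟩

/-- Soundness: if `u = s` in all models then the implication holds. -/
theorem cINST_sound {m u s : ℕ} {R : List (ℕ × ℕ × ℕ)} (hu : u < m) (hs : s < m)
    (hR : ∀ t ∈ R, t.1 < m ∧ t.2.1 < m ∧ t.2.2 < m)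
    (hmodel : ∀ (V : Type) (g : ℕ → V → V), IsModel R g → g u = g s) :
    CIHolds (cINST m u s R) := by
  intro Ω p hp V X _ hcs
  have hval := (cINST_valid hu hs hR).2.2
  have hvalid : ∀ c ∈ cHYP m u s R, CISValid (2 * (4 + 3 * m)) c :=
    fun c hc => hval c (List.mem_cons_of_mem _ hc)
  change ∀ c ∈ cHYP m u s R, CondIndep p X c.1 c.2.1 c.2.2 at hcs
  have memF : ∀ c ∈ cFIX u s, c ∈ cHYP m u s R := by
    intro c hc
    simp only [cHYP, List.mem_append]
    exact Or.inl (Or.inl (Or.inl hc))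
  have memC : ∀ i < 4 + 3 * m, ∀ c ∈ cCOPY (4 + 3 * m) i, c ∈ cHYP m u s R := by
    intro i hi c hc
    simp only [cHYP, List.mem_append, List.mem_flatMap, List.mem_range]
    exact Or.inl (Or.inl (Or.inr ⟨i, hi, hc⟩))
  set S := {ω // 0 < p ω} with hS
  -- exchange on the support
  have exch : ∀ c ∈ cHYP m u s R, ∀ ω ω' : S, (∀ i ∈ c.2.2, X i ω = X i ω') →
      ∃ ω'' : S, (∀ i ∈ c.1, X i ω'' = X i ω) ∧ (∀ i ∈ c.2.1, X i ω'' = X i ω') ∧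
        (∀ i ∈ c.2.2, X i ω'' = X i ω) := by
    intro c hc ω ω' h
    obtain ⟨ω'', h0, h1, h2, h3⟩ := (hcs c hc).exchange hp
      (fun i hi hi' => (hvalid c hc).2.1 i ⟨hi, hi'⟩) ω.2 ω'.2 h
    exact ⟨⟨ω'', h0⟩, h1, h2, h3⟩
  let r : ℕ → S → S → Prop := fun i ω ω' => X (cA i) ω = X (cA i) ω' ∨ X (cB i) ω = X (cB i) ω'
  let E : ℕ → Setoid S := fun i => Relation.EqvGen.setoid (r i)
  have EA : ∀ i ω ω', X (cA i) ω.1 = X (cA i) ω'.1 → (E i) ω ω' :=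
    fun i ω ω' h => Relation.EqvGen.rel _ _ (Or.inl h)
  have EB : ∀ i ω ω', X (cB i) ω.1 = X (cB i) ω'.1 → (E i) ω ω' :=
    fun i ω ω' h => Relation.EqvGen.rel _ _ (Or.inr h)
  -- replacement of the copies of `i`
  have repl1 : ∀ i < 4 + 3 * m, ∀ ω ω' η : S, r i ω ω' → X (cA i) η = X (cA i) ω →
      X (cB i) η = X (cB i) ω → ∃ η' : S, (∀ j ∈ restOf (4 + 3 * m) i, X j η' = X j η) ∧
        X (cA i) η' = X (cA i) ω' ∧ X (cB i) η' = X (cB i) ω' := by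
    intro i hi ω ω' η hr h1 h2
    rcases hr with hr | hr
    · obtain ⟨η', k1, k2, k3⟩ := exch _ (memC i hi ([cB i], restOf (4 + 3 * m) i, [cA i])
        (by simp [cCOPY])) ω' η (by simp [h1, hr])
      exact ⟨η', k2, k3 _ (by simp), k1 _ (by simp)⟩
    · obtain ⟨η', k1, k2, k3⟩ := exch _ (memC i hi ([cA i], restOf (4 + 3 * m) i, [cB i])
        (by simp [cCOPY])) ω' η (by simp [h2, hr])
      exact ⟨η', k2, k1 _ (by simp), k3 _ (by simp)⟩
  have rsymm : ∀ i ω ω', r i ω ω' → r i ω' ω := by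
    rintro i ω ω' (h | h)
    · exact Or.inl h.symm
    · exact Or.inr h.symm
  have repl : ∀ i < 4 + 3 * m, ∀ ω ω' : S, (E i) ω ω' →
      (∀ η : S, X (cA i) η = X (cA i) ω →
      X (cB i) η = X (cB i) ω → ∃ η' : S, (∀ j ∈ restOf (4 + 3 * m) i, X j η' = X j η) ∧
        X (cA i) η' = X (cA i) ω' ∧ X (cB i) η' = X (cB i) ω') ∧
      (∀ η : S, X (cA i) η = X (cA i) ω' →
      X (cB i) η = X (cB i) ω' → ∃ η' : S, (∀ j ∈ restOf (4 + 3 * m) i, X j η' = X j η) ∧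
        X (cA i) η' = X (cA i) ω ∧ X (cB i) η' = X (cB i) ω) := by
    intro i hi ω ω' h
    replace h : Relation.EqvGen (r i) ω ω' := h
    induction h with
    | rel x y h => exact ⟨fun η => repl1 i hi x y η h, fun η => repl1 i hi y x η (rsymm i x y h)⟩
    | refl x => exact ⟨fun η h1 h2 => ⟨η, fun _ _ => rfl, h1, h2⟩,
        fun η h1 h2 => ⟨η, fun _ _ => rfl, h1, h2⟩⟩
    | symm x y _ ih => exact ⟨ih.2, ih.1⟩
    | trans x y z _ _ ih1 ih2 =>
      constructor
      · intro η h1 h2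
        obtain ⟨η', a1, a2, a3⟩ := ih1.1 η h1 h2
        obtain ⟨η'', b1, b2, b3⟩ := ih2.1 η' a2 a3
        exact ⟨η'', fun j hj => (b1 j hj).trans (a1 j hj), b2, b3⟩
      · intro η h1 h2
        obtain ⟨η', a1, a2, a3⟩ := ih2.2 η h1 h2
        obtain ⟨η'', b1, b2, b3⟩ := ih1.2 η' a2 a3
        exact ⟨η'', fun j hj => (b1 j hj).trans (a1 j hj), b2, b3⟩
  have EFD : ∀ z a b, cFD z a b ∈ cHYP m u s R → ∀ ω ω', (E a) ω ω' → (E b) ω ω' →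
      (E z) ω ω' := by
    intro z a b hc ω ω' ha hb
    obtain ⟨v1, v2, v3, v4⟩ := hvalid _ hc
    have hz : z < 4 + 3 * m := by
      have := (v1 (cA z) (by simp [cFD])).2
      simp only [cA] at this; omega
    have ha' : a < 4 + 3 * m := by
      have := (v1 (cA a) (by simp [cFD])).2
      simp only [cA] at this; omega
    have hb' : b < 4 + 3 * m := by
      have := (v1 (cA b) (by simp [cFD])).2
      simp only [cA] at this; omega
    have hza : z ≠ a := by
      rintro rfl
      exact v3 (cA z) (by simp [cFD])
    have hzb : z ≠ b := by
      rintro rfl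
      exact v3 (cA z) (by simp [cFD])
    obtain ⟨ω1, p1, p2, p3⟩ := (repl a ha' ω ω' ha).1 ω rfl rfl
    have hmid : ∃ ω2 : S, X (cA z) ω2 = X (cA z) ω ∧ X (cA a) ω2 = X (cA a) ω' ∧
        X (cA b) ω2 = X (cA b) ω' := by
      by_cases hab : a = b
      · subst hab
        exact ⟨ω1, p1 _ (mem_restOf_A hz hza), p2, p2⟩
      · obtain ⟨ω2, q1, q2, q3⟩ := (repl b hb' ω ω' hb).1 ω1
          (p1 _ (mem_restOf_A hb' (Ne.symm hab))) (p1 _ (mem_restOf_B hb' (Ne.symm hab)))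
        exact ⟨ω2, (q1 _ (mem_restOf_A hz hzb)).trans (p1 _ (mem_restOf_A hz hza)),
          (q1 _ (mem_restOf_A ha' hab)).trans p2, q2⟩
    obtain ⟨ω2, q1, q2, q3⟩ := hmid
    obtain ⟨ω3, k1, k2, k3⟩ := exch _ hc ω2 ω' (by simp [cFD, q2, q3])
    have e1 : (E z) ω ω2 := EA z ω ω2 q1.symm
    have e2 : (E z) ω2 ω3 := EA z ω2 ω3 (k1 _ (by simp [cFD])).symm
    have e3 : (E z) ω3 ω' := EB z ω3 ω' (k2 _ (by simp [cFD]))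
    exact (E z).trans e1 ((E z).trans e2 e3)
  have habs := sound_abs (S := S) (Q := fun i => Quotient (E i)) (fun i ω => Quotient.mk (E i) ω)
    hu hs hR hmodel ?_ ?_ ?_ ?_
  · have h3 : ∀ ω ω' : S, Relation.EqvGen (r 3) ω ω' := by
      intro ω ω'
      exact Quotient.exact (habs ω ω')
    have c1 := hcs _ (memF ([cA 3], [cA 0], [cB 3]) (by simp [cFIX]))
    have c2 := hcs _ (memF ([cB 3], [cA 0], [cA 3]) (by simp [cFIX]))
    exact double_markov hp (by simp [cA]) (by simp [cA, cB]) c1 c2 h3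
  · intro z a b hc ω ω' ha hb
    exact Quotient.sound (EFD z a b hc ω ω' (Quotient.exact ha) (Quotient.exact hb))
  · intro a b hc ω ω'
    obtain ⟨ω'', k1, k2, k3⟩ := exch _ hc ω ω' (by simp [cIND])
    exact ⟨ω'', Quotient.sound (EA _ _ _ (k1 _ (by simp [cIND]))),
      Quotient.sound (EA _ _ _ (k2 _ (by simp [cIND])))⟩
  · intro ω ω' ω''
    obtain ⟨η, k1, k2, k3⟩ := exch _ (memF (cIND 1 2) (by simp [cFIX])) ω' ω'' (by simp [cIND])
    obtain ⟨ξ, l1, l2, l3⟩ := exch _ (memF ([cA 0], [cA 1, cA 2], []) (by simp [cFIX])) ω η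
      (by simp)
    refine ⟨ξ, Quotient.sound (EA _ _ _ (l1 _ (by simp))),
      Quotient.sound (EA _ _ _ ((l2 _ (by simp)).trans (k1 _ (by simp [cIND])))),
      Quotient.sound (EA _ _ _ ((l2 _ (by simp)).trans (k2 _ (by simp [cIND]))))⟩
  · intro x
    exact Quotient.exists_rep x

/-! ### Completeness -/

theorem unif_isProb (G : Type) [Fintype G] [Nonempty G] :
    IsProb (fun _ : G => (1 : ℝ) / Fintype.card G) := by
  constructor
  · intro _; positivity
  · rw [Pr_eq_ind]
    simp

theorem unif_hom {G A : Type} [Fintype G] [AddCommGroup G] [Fintype A] [AddCommGroup A]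
    (F : G →+ A) (hF : Function.Surjective F) (a : A) :
    Pr (fun _ : G => (1 : ℝ) / Fintype.card G) {ω | F ω = a} = 1 / Fintype.card A := by
  have hp := unif_isProb G
  set p := (fun _ : G => (1 : ℝ) / Fintype.card G)
  have h1 : ∀ b, Pr p {ω | F ω = b} = Pr p {ω | F ω = a} := by
    intro b
    obtain ⟨g, hg⟩ := hF (b - a)
    rw [Pr_eq_ind, Pr_eq_ind, ← (Equiv.addRight g).tsum_eq]
    congr 1
    ext ω
    have : (Equiv.addRight g ω ∈ {ω | F ω = b}) ↔ ω ∈ {ω | F ω = a} := by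
      simp [hg, ← eq_sub_iff_add_eq]
    by_cases h : ω ∈ {ω | F ω = a}
    · rw [Set.indicator_of_mem h, Set.indicator_of_mem (this.mpr h)]
    · rw [Set.indicator_of_notMem h, Set.indicator_of_notMem (fun h' => h (this.mp h'))]
  have h2 := Pr_fiber hp Set.univ F
  rw [hp.2] at h2
  simp only [Set.mem_univ, and_true, h1] at h2
  rw [tsum_fintype, Finset.sum_const, Finset.card_univ, nsmul_eq_mul] at h2
  have : (Fintype.card A : ℝ) ≠ 0 := by
    simp
  field_simp
  linarith

theorem unif_pair {G A B : Type} [Fintype G] [AddCommGroup G] [Fintype A] [AddCommGroup A]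
    [Fintype B] [AddCommGroup B] (f : G →+ A) (h : G →+ B) {p : G → ℝ}
    (hp : p = fun _ : G => (1 : ℝ) / Fintype.card G)
    (hs : ∀ a b, ∃ g, f g = a ∧ h g = b) (a : A) (b : B) :
    Pr p {ω | f ω = a ∧ h ω = b} = Pr p {ω | f ω = a} * Pr p {ω | h ω = b} := by
  subst hp
  rw [unif_hom f (fun a => (hs a 0).imp fun _ h => h.1),
    unif_hom h (fun b => (hs 0 b).imp fun _ h => h.2)]
  have := unif_hom (f.prod h) (by rintro ⟨a, b⟩; obtain ⟨g, h1, h2⟩ := hs a b; exact ⟨g, by simp [h1, h2]⟩) (a, b)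
  simp only [AddMonoidHom.prod_apply, Prod.mk.injEq] at this
  rw [this]
  simp [mul_comm]

/-- A statement holds if the first group of variables is determined by the third. -/
theorem condIndep_of_fd {Ω : Type} {p : Ω → ℝ} {V : ℕ → Type} {X : ∀ i, Ω → V i}
    {U Vl W : List ℕ} (h : ∀ ω ω', (∀ i ∈ W, X i ω = X i ω') → ∀ i ∈ U, X i ω = X i ω') :
    CondIndep p X U Vl W := by
  intro v
  by_cases hne : ∃ ω, ω ∈ PatEvent X (U ++ W) v
  · obtain ⟨ω, hω⟩ := hne
    have key : ∀ ω', ω' ∈ PatEvent X W v → ∀ i ∈ U, X i ω' = v i := by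
      intro ω' hω' i hi
      rw [h ω' ω (fun j hj => (hω' j hj).trans (hω j (by simp [hj])).symm) i hi]
      exact hω i (by simp [hi])
    have e1 : PatEvent X (U ++ W) v = PatEvent X W v := by
      ext ω'
      refine ⟨fun h' i hi => h' i (by simp [hi]), fun h' i hi => ?_⟩
      rcases List.mem_append.mp hi with hi | hi
      · exact key ω' h' i hi
      · exact h' i hi
    have e2 : PatEvent X (U ++ Vl ++ W) v = PatEvent X (Vl ++ W) v := by
      ext ω'
      refine ⟨fun h' i hi => h' i (by simp at hi ⊢; tauto), fun h' i hi => ?_⟩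
      by_cases hU : i ∈ U
      · exact key ω' (fun j hj => h' j (by simp [hj])) i hU
      · exact h' i (by simp at hi ⊢; tauto)
    rw [e1, e2, mul_comm]
  · have e1 : PatEvent X (U ++ W) v = ∅ := by
      ext ω'; simp; exact fun h' => hne ⟨ω', h'⟩
    have e2 : PatEvent X (U ++ Vl ++ W) v = ∅ := by
      ext ω'; simp
      exact fun h' => hne ⟨ω', fun i hi => h' i (by simp at hi ⊢; tauto)⟩
    rw [e1, e2]
    simp [Pr]

/-- Base variables of the countermodel. -/
def mVar {B : Type} (φ : ℕ → B → B) (u s : ℕ) (i : ℕ) :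
    ((B → ZMod 2) × (B → ZMod 2) × (B → ZMod 2)) → (B → ZMod 2) := fun x =>
  if i = 0 then x.1 else if i = 1 then x.2.1 else if i = 2 then x.2.2
  else if i = 3 then (x.1 ∘ φ u - x.1 ∘ φ s)
  else if i % 3 = 1 then x.2.1 - x.1 ∘ φ ((i - 4) / 3)
  else if i % 3 = 2 then x.2.2 - x.1 ∘ φ ((i - 5) / 3)
  else x.2.2 - x.2.1 ∘ φ ((i - 6) / 3)

section
variable {B : Type} (φ : ℕ → B → B) (u s : ℕ)
theorem mVar_0 : mVar φ u s 0 = fun x => x.1 := by ext; simp [mVar]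
theorem mVar_1 : mVar φ u s 1 = fun x => x.2.1 := by ext; simp [mVar]
theorem mVar_2 : mVar φ u s 2 = fun x => x.2.2 := by ext; simp [mVar]
theorem mVar_3 : mVar φ u s 3 = fun x => (x.1 ∘ φ u - x.1 ∘ φ s) := by ext; simp [mVar]
theorem mVar_P (g : ℕ) : mVar φ u s (zP g) = fun x => x.2.1 - x.1 ∘ φ g := by
  have h1 : (4 + 3 * g) % 3 = 1 := by omega
  have h2 : 4 + 3 * g ≠ 3 := by omega
  have h3 : 4 + 3 * g ≠ 1 := by omega
  have h4 : 4 + 3 * g ≠ 2 := by omega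
  ext; simp [mVar, zP, h1, h2, h3, h4]
theorem mVar_Q (g : ℕ) : mVar φ u s (zQ g) = fun x => x.2.2 - x.1 ∘ φ g := by
  have h1 : (5 + 3 * g) % 3 = 2 := by omega
  have h2 : 5 + 3 * g ≠ 3 := by omega
  have h3 : 5 + 3 * g ≠ 1 := by omega
  have h4 : 5 + 3 * g ≠ 2 := by omega
  ext; simp [mVar, zQ, h1, h2, h3, h4]
theorem mVar_R (g : ℕ) : mVar φ u s (zR g) = fun x => x.2.2 - x.2.1 ∘ φ g := by
  have h1 : (6 + 3 * g) % 3 = 0 := by omega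
  have h2 : 6 + 3 * g ≠ 3 := by omega
  have h3 : 6 + 3 * g ≠ 1 := by omega
  have h4 : 6 + 3 * g ≠ 2 := by omega
  ext; simp [mVar, zR, h1, h2, h3, h4]

theorem mVar_add (i : ℕ) (x y) : mVar φ u s i (x + y) = mVar φ u s i x + mVar φ u s i y := by
  unfold mVar
  split_ifs <;> ext b <;> simp <;> ring

/-- Base variables as homomorphisms. -/
def mHom (i : ℕ) : ((B → ZMod 2) × (B → ZMod 2) × (B → ZMod 2)) →+ (B → ZMod 2) :=
  AddMonoidHom.mk' (mVar φ u s i) (mVar_add φ u s i)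

end

theorem cINST_complete {B : Type} [Finite B] (φ : ℕ → B → B) {m u s : ℕ}
    {R : List (ℕ × ℕ × ℕ)} (h0 : φ 0 = id) (hR : ∀ t ∈ R, φ t.1 = φ t.2.2 ∘ φ t.2.1)
    (hus : φ u ≠ φ s) : ¬ CIHolds (cINST m u s R) := by
  have := Fintype.ofFinite B
  intro hH
  let Ω := (B → ZMod 2) × (B → ZMod 2) × (B → ZMod 2)
  have hp := unif_isProb Ω
  set p := (fun _ : Ω => (1 : ℝ) / Fintype.card Ω) with hpdef
  let X : ∀ i : ℕ, Ω → (B → ZMod 2) := fun i => mVar φ u s ((i - 1) / 2)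
  have XA : ∀ i, X (cA i) = mVar φ u s i := by
    intro i
    have : (cA i - 1) / 2 = i := by simp only [cA]; omega
    simp only [X, this]
  have XB : ∀ i, X (cB i) = mVar φ u s i := by
    intro i
    have : (cB i - 1) / 2 = i := by simp only [cB]; omega
    simp only [X, this]
  have hFD : ∀ z a b, (∀ x y, mVar φ u s a x = mVar φ u s a y → mVar φ u s b x = mVar φ u s b y →
      mVar φ u s z x = mVar φ u s z y) → CondIndep p X (cFD z a b).1 (cFD z a b).2.1 (cFD z a b).2.2 := by
    intro z a b h
    apply condIndep_of_fd
    intro ω ω' h'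
    simp only [cFD, List.mem_cons, List.not_mem_nil, or_false, forall_eq_or_imp, forall_eq, XA]
      at h' ⊢
    exact h _ _ h'.1 h'.2
  have hIND : ∀ a b, (∀ v w, ∃ x, mVar φ u s a x = v ∧ mVar φ u s b x = w) →
      CondIndep p X (cIND a b).1 (cIND a b).2.1 (cIND a b).2.2 := by
    intro a b h v
    have := unif_pair (mHom φ u s a) (mHom φ u s b) hpdef h (v (cA a)) (v (cA b))
    simp only [mHom, AddMonoidHom.mk'_apply] at this
    have hu := hp.2
    simpa [PatEvent, cIND, XA, hu] using this
  have hREL : ∀ t : ℕ × ℕ × ℕ, φ t.1 = φ t.2.2 ∘ φ t.2.1 →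
      CondIndep p X (cREL t).1 (cREL t).2.1 (cREL t).2.2 := by
    intro t ht
    apply hFD
    rintro ⟨x1, x2, x3⟩ ⟨y1, y2, y3⟩
    simp only [mVar_P, mVar_Q, mVar_R, ht]
    intro e1 e2
    ext b
    have e1' := congrFun e1 (φ t.2.1 b)
    have e2' := congrFun e2 b
    simp at e1' e2' ⊢
    linear_combination e1' + e2'
  have hall := hH Ω p hp (fun _ => B → ZMod 2) X (fun i => Set.toFinite _) ?_
  · -- the target fails
    obtain ⟨b, hb⟩ := Function.ne_iff.mp hus
    have hc := hall (fun i => if i = cA 0 then (fun c => if c = φ u b then 1 else 0) else 0)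
    set x0 : B → ZMod 2 := (fun c => if c = φ u b then 1 else 0) with hx0
    have hppos : ∀ ω, 0 < p ω := fun ω => by simp only [hpdef]; positivity
    have h30 : cA 3 ≠ cA 0 := by simp [cA]
    simp only [cIND, PatEvent, List.cons_append, List.nil_append, List.mem_cons, List.not_mem_nil,
      or_false, forall_eq_or_imp, forall_eq, XA, h30, if_true, if_false, mVar_0, mVar_3] at hc
    have e1 : {ω : Ω | ω.1 ∘ φ u - ω.1 ∘ φ s = 0 ∧ ω.1 = x0} = ∅ := by
      ext ω
      simp only [Set.mem_ofPred_eq, Set.mem_empty_iff_false, iff_false, not_and]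
      intro h1 h2
      rw [h2] at h1
      have := congrFun h1 b
      simp [hx0, Ne.symm hb] at this
    have e2 : Pr p {ω : Ω | ω.1 ∘ φ u - ω.1 ∘ φ s = 0} > 0 :=
      Pr_pos hp (ω := (0, 0, 0)) (by ext; simp) (hppos (0, 0, 0))
    have e3 : Pr p {ω : Ω | ω.1 = x0} > 0 :=
      Pr_pos hp (ω := (x0, 0, 0)) (by simp) (hppos (x0, 0, 0))
    have e4 := mul_pos e2 e3
    rw [← hc, e1] at e4
    simp [Pr] at e4
  · intro c hc
    change c ∈ cHYP m u s R at hc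
    simp only [cHYP, List.mem_append, List.mem_flatMap, List.mem_range,
      List.mem_map] at hc
    rcases hc with ((hc | ⟨i, hi, hc⟩) | ⟨g, hg, hc⟩) | ⟨t, ht, rfl⟩
    · simp only [cFIX, List.mem_cons, List.not_mem_nil, or_false] at hc
      rcases hc with rfl | rfl | rfl | rfl | rfl | rfl | rfl | rfl | rfl
      · intro v
        have := unif_pair (mHom φ u s 0) ((mHom φ u s 1).prod (mHom φ u s 2)) hpdef
          (fun a b => ⟨(a, b.1, b.2), by simp [mHom, mVar_0], by simp [mHom, mVar_1, mVar_2]⟩) (v (cA 0)) (v (cA 1), v (cA 2))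
        simp only [mHom, AddMonoidHom.mk'_apply, AddMonoidHom.prod_apply, Prod.mk.injEq] at this
        have hu := hp.2
        simpa [PatEvent, XA, hu] using this
      · apply hIND
        intro v w
        exact ⟨(0, v, w), by simp [mVar_1], by simp [mVar_2]⟩
      · apply hFD
        rintro ⟨x1, x2, x3⟩ ⟨y1, y2, y3⟩
        simp only [mVar_R, mVar_1, mVar_2, h0, Function.comp_id]
        rintro e1 rfl
        simpa using e1
      · apply hIND
        intro v w
        exact ⟨(w - v, w, 0), by simp [mVar_P, h0], by simp [mVar_1]⟩
      · apply hFD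
        rintro ⟨x1, x2, x3⟩ ⟨y1, y2, y3⟩
        simp only [mVar_P, mVar_0, mVar_1, h0, Function.comp_id]
        rintro e1 rfl
        simpa using e1
      · apply hFD
        rintro ⟨x1, x2, x3⟩ ⟨y1, y2, y3⟩
        simp only [mVar_0, mVar_3]
        rintro rfl _
        rfl
      · apply hFD
        rintro ⟨x1, x2, x3⟩ ⟨y1, y2, y3⟩
        simp only [mVar_P, mVar_3]
        intro e1 e2
        have := congrArg₂ (fun a b => b - a) e1 e2
        simpa using this
      · apply condIndep_of_fd
        simp [XA, XB]
      · apply condIndep_of_fd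
        simp [XA, XB]
    · simp only [cCOPY, List.mem_cons, List.not_mem_nil, or_false] at hc
      rcases hc with rfl | rfl
      · apply condIndep_of_fd
        simp [XA, XB]
      · apply condIndep_of_fd
        simp [XA, XB]
    · simp only [cGEN, List.mem_cons, List.not_mem_nil, or_false] at hc
      rcases hc with rfl | rfl | rfl | rfl | rfl | rfl | rfl | rfl | rfl | rfl | rfl
      · apply hFD
        rintro ⟨x1, x2, x3⟩ ⟨y1, y2, y3⟩
        simp only [mVar_P, mVar_0, mVar_1]
        rintro rfl rfl; rfl
      · apply hFD
        rintro ⟨x1, x2, x3⟩ ⟨y1, y2, y3⟩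
        simp only [mVar_P, mVar_0, mVar_1]
        rintro rfl h; simpa using h
      · apply hIND
        intro v w
        exact ⟨(w, v + w ∘ φ g, 0), by simp [mVar_P], by simp [mVar_0]⟩
      · apply hFD
        rintro ⟨x1, x2, x3⟩ ⟨y1, y2, y3⟩
        simp only [mVar_Q, mVar_0, mVar_2]
        rintro rfl rfl; rfl
      · apply hFD
        rintro ⟨x1, x2, x3⟩ ⟨y1, y2, y3⟩
        simp only [mVar_Q, mVar_0, mVar_2]
        rintro rfl h; simpa using h
      · apply hIND
        intro v w
        exact ⟨(w, 0, v + w ∘ φ g), by simp [mVar_Q], by simp [mVar_0]⟩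
      · apply hFD
        rintro ⟨x1, x2, x3⟩ ⟨y1, y2, y3⟩
        simp only [mVar_R, mVar_1, mVar_2]
        rintro rfl rfl; rfl
      · apply hFD
        rintro ⟨x1, x2, x3⟩ ⟨y1, y2, y3⟩
        simp only [mVar_R, mVar_1, mVar_2]
        rintro rfl h; simpa using h
      · apply hIND
        intro v w
        exact ⟨(0, w, v + w ∘ φ g), by simp [mVar_R], by simp [mVar_1]⟩
      · exact hREL _ (by simp [h0])
      · exact hREL _ (by simp [h0])
    · exact hREL t (hR t ht)

/-! ### Stack machines -/

/-- Push an optional letter on a family of stacks. -/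
def spush {K A : Type} (a : Option (K × A)) (S : K → List A) : K → List A :=
  match a with
  | none => S
  | some l => Function.update S l.1 (l.2 :: S l.1)

/-- The family of stacks obtained from a word, the first letter being the topmost. -/
def stkOf {K A : Type} (w : List (K × A)) : K → List A :=
  w.foldr (fun l S => spush (some l) S) (fun _ => [])

theorem spush_comm {K A : Type} {l l' : K × A} (h : l.1 ≠ l'.1) (S : K → List A) :
    spush (some l) (spush (some l') S) = spush (some l') (spush (some l) S) := by
  simp only [spush]
  rw [Function.update_of_ne h, Function.update_of_ne h.symm, Function.update_comm h]

theorem spush_inj {K A : Type} {l : K × A} {S S' : K → List A}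
    (h : spush (some l) S = spush (some l) S') : S = S' := by
  ext1 k
  have := congrFun h k
  by_cases hk : k = l.1
  · subst hk
    simpa [spush] using this
  · simpa [spush, hk] using this

theorem stkOf_split {K A : Type} {w : List (K × A)} {k : K} {a : A} {t : List A}
    (h : stkOf w k = a :: t) : ∃ x y, w = x ++ (k, a) :: y ∧ ∀ l ∈ x, l.1 ≠ k := by
  induction w with
  | nil => simp [stkOf] at h
  | cons l w ih =>
    by_cases hk : l.1 = k
    · subst hk
      simp [stkOf, spush] at h
      exact ⟨[], w, by simp [← h.1], by simp⟩
    · have h' : stkOf w k = a :: t := by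
        simpa [stkOf, spush, Ne.symm hk] using h
      obtain ⟨x, y, rfl, hx⟩ := ih h'
      refine ⟨l :: x, y, by simp, ?_⟩
      intro l' hl'
      rcases List.mem_cons.mp hl' with rfl | hl'
      · exact hk
      · exact hx l' hl'

theorem stkOf_move {K A : Type} (x y : List (K × A)) (l : K × A) (hx : ∀ l' ∈ x, l'.1 ≠ l.1) :
    stkOf (x ++ l :: y) = stkOf (l :: (x ++ y)) := by
  induction x with
  | nil => rfl
  | cons l' x ih =>
    have := ih (fun z hz => hx z (by simp [hz]))
    simp only [stkOf, List.cons_append, List.foldr_cons] at this ⊢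
    rw [this, spush_comm (hx l' (by simp))]

/-- Product of the push operators along a word. -/
def PW {V L : Type} (p : L → V → V) (w : List L) (x : V) : V := w.foldl (fun y l => p l y) x

theorem PW_move {K A V : Type} (p : K × A → V → V)
    (hc : ∀ l l' : K × A, l.1 ≠ l'.1 → ∀ x, p l (p l' x) = p l' (p l x))
    (x y : List (K × A)) (l : K × A) (hx : ∀ l' ∈ x, l'.1 ≠ l.1) (v : V) :
    PW p (x ++ l :: y) v = PW p (l :: (x ++ y)) v := by
  induction x generalizing v with
  | nil => rfl
  | cons l' x ih =>
    have := ih (fun z hz => hx z (by simp [hz])) (p l' v)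
    simp only [PW, List.cons_append, List.foldl_cons] at this ⊢
    rw [this, hc _ _ (hx l' (by simp))]

theorem PW_congr {K A V : Type} (p : K × A → V → V)
    (hc : ∀ l l' : K × A, l.1 ≠ l'.1 → ∀ x, p l (p l' x) = p l' (p l x))
    (w w' : List (K × A)) (h : stkOf w = stkOf w') (v : V) : PW p w v = PW p w' v := by
  induction w generalizing w' v with
  | nil =>
    cases w' with
    | nil => rfl
    | cons l w' =>
      have := congrFun h l.1
      simp [stkOf, spush] at this
  | cons l w ih =>
    have h1 : stkOf w' l.1 = l.2 :: stkOf w l.1 := by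
      rw [← h]; simp [stkOf, spush]
    obtain ⟨x, y, rfl, hx⟩ := stkOf_split h1
    change stkOf (l :: w) = stkOf (x ++ l :: y) at h
    change _ = PW p (x ++ l :: y) v
    rw [stkOf_move x y l hx] at h
    rw [PW_move p hc x y l hx]
    have h2 : stkOf w = stkOf (x ++ y) := spush_inj (l := l) h
    exact ih _ h2 (p l v)

theorem stkOf_surj {K A : Type} [Finite K] (S : K → List A) : ∃ w, stkOf w = S := by
  have := Fintype.ofFinite K
  obtain ⟨n, hn⟩ : ∃ n, n = ∑ k, (S k).length := ⟨_, rfl⟩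
  induction n generalizing S with
  | zero =>
    refine ⟨[], ?_⟩
    ext1 k
    have := (Finset.sum_eq_zero_iff.mp hn.symm) k (Finset.mem_univ k)
    simp [stkOf, List.length_eq_zero_iff.mp this]
  | succ n ih =>
    obtain ⟨k, hk⟩ : ∃ k, S k ≠ [] := by
      by_contra hc
      push Not at hc
      simp [hc] at hn
    obtain ⟨a, t, hat⟩ := List.exists_cons_of_ne_nil hk
    have h1 : S = spush (some (k, a)) (Function.update S k t) := by
      ext1 k'
      by_cases hk' : k' = k
      · subst hk'; simp [spush, hat]
      · simp [spush, hk']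
    obtain ⟨w, hw⟩ := ih (Function.update S k t) (by
      have e1 : ∑ k', (S k').length = (S k).length + ∑ k' ∈ Finset.univ.erase k, (S k').length :=
        (Finset.add_sum_erase _ _ (Finset.mem_univ k)).symm
      have e2 : ∑ k', (Function.update S k t k').length = (Function.update S k t k).length +
          ∑ k' ∈ Finset.univ.erase k, (Function.update S k t k').length :=
        (Finset.add_sum_erase _ _ (Finset.mem_univ k)).symm
      have e3 : ∑ k' ∈ Finset.univ.erase k, (Function.update S k t k').length =
          ∑ k' ∈ Finset.univ.erase k, (S k').length :=
        Finset.sum_congr rfl (fun k' hk' => by rw [Function.update_of_ne (Finset.ne_of_mem_erase hk')])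
      rw [e2, e3]
      rw [e1] at hn
      simp [hat] at hn ⊢
      omega)
    exact ⟨(k, a) :: w, by rw [h1, ← hw]; rfl⟩

/-- A configuration. -/
abbrev SCfg (K A Q : Type) : Type := Q × (K → List A)

/-- The `n`-th iterate of a step function. -/
def stepN {C : Type} (step : C → Option C) : ℕ → C → Option C
  | 0, c => some c
  | n + 1, c => (step c).bind (stepN step n)

/-- The replacement rules of a machine. -/
def SRule {K A Q : Type} (step : SCfg K A Q → Option (SCfg K A Q)) (a : Option (K × A)) (q : Q)
    (b : Option (K × A)) (q' : Q) : Prop :=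
  ∀ S, step (q, spush a S) = some (q', spush b S)

/-- Every step is an instance of a rule. -/
def IsRuled {K A Q : Type} (step : SCfg K A Q → Option (SCfg K A Q)) : Prop :=
  ∀ c d, step c = some d → ∃ a b S, c.2 = spush a S ∧ d.2 = spush b S ∧ SRule step a c.1 b d.1

/-- The fixed generators. -/
inductive GenT (K A Q : Type) : Type
  | po (a : Option (K × A))
  | pp (l l' : K × A)
  | f (q : Q)
  | pf (a : Option (K × A)) (q : Q)
  | ft (q : Q)
  | tau
  | s

/-- The fixed relations; `GRel k g h` stands for `k = g ∘ h`. -/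
inductive GRel {K A Q : Type} (step : SCfg K A Q → Option (SCfg K A Q)) (qh : Q) (lr : K × A) :
    GenT K A Q → GenT K A Q → GenT K A Q → Prop
  | comm1 (l l') : GRel step qh lr (.pp l l') (.po (some l)) (.po (some l'))
  | comm2 (l l') : l.1 ≠ l'.1 → GRel step qh lr (.pp l l') (.po (some l')) (.po (some l))
  | pf (a q) : GRel step qh lr (.pf a q) (.po a) (.f q)
  | ft (q) : GRel step qh lr (.ft q) (.f q) .tau
  | rule (a q b q') : SRule step a q b q' → GRel step qh lr (.pf a q) (.po b) (.ft q')
  | rej : GRel step qh lr .s (.po (some lr)) (.f qh)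
  | ps (l) : GRel step qh lr .s (.po (some l)) .s
  | st : GRel step qh lr .s .s .tau

instance {K A Q : Type} [Finite K] [Finite A] [Finite Q] : Finite (GenT K A Q) := by
  let F : GenT K A Q → (Option (K × A)) ⊕ ((K × A) × (K × A)) ⊕ Q ⊕ (Option (K × A) × Q) ⊕ Q ⊕ Bool
    := fun g => match g with
      | .po a => .inl a
      | .pp l l' => .inr (.inl (l, l'))
      | .f q => .inr (.inr (.inl q))
      | .pf a q => .inr (.inr (.inr (.inl (a, q))))
      | .ft q => .inr (.inr (.inr (.inr (.inl q))))
      | .tau => .inr (.inr (.inr (.inr (.inr true))))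
      | .s => .inr (.inr (.inr (.inr (.inr false))))
  apply Finite.of_injective F
  intro x y h
  cases x <;> cases y <;> simp [F] at h <;> simp [h]

/-- Soundness on the level of machines. -/
theorem machine_sound {K A Q V : Type} [Finite K] {step : SCfg K A Q → Option (SCfg K A Q)}
    (hr : IsRuled step) {qh : Q} {lr : K × A} (γ : GenT K A Q → V → V)
    (h1 : ∀ x, γ (.po none) x = x)
    (hrel : ∀ k g h, GRel step qh lr k g h → ∀ x, γ k x = γ g (γ h x))
    {n : ℕ} {q : Q} {w : List (K × A)} {S : K → List A}
    (hrun : stepN step n (q, stkOf w) = some (qh, spush (some lr) S)) (x : V) :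
    PW (fun l => γ (.po (some l))) w (γ (.f q) x) = γ .s x := by
  have hc : ∀ l l' : K × A, l.1 ≠ l'.1 → ∀ x, γ (.po (some l)) (γ (.po (some l')) x) =
      γ (.po (some l')) (γ (.po (some l)) x) := by
    intro l l' h x
    rw [← hrel _ _ _ (.comm1 l l'), ← hrel _ _ _ (.comm2 l l' h)]
  have hps : ∀ (w : List (K × A)) x, PW (fun l => γ (.po (some l))) w (γ .s x) = γ .s x := by
    intro w x
    induction w with
    | nil => rfl
    | cons l w ih =>
      change PW _ w (γ (.po (some l)) (γ .s x)) = _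
      rw [← hrel _ _ _ (.ps l), ih]
  induction n generalizing q w x with
  | zero =>
    simp only [stepN, Option.some.injEq, Prod.mk.injEq] at hrun
    obtain ⟨rfl, h⟩ := hrun
    obtain ⟨w0, rfl⟩ := stkOf_surj S
    rw [PW_congr _ hc w (lr :: w0) h]
    change PW _ w0 (γ (.po (some lr)) _) = _
    rw [← hrel _ _ _ .rej, hps]
  | succ n ih =>
    simp only [stepN, Option.bind_eq_some_iff] at hrun
    obtain ⟨⟨q', S'⟩, hs, hrun⟩ := hrun
    obtain ⟨a, b, S0, e1, e2, hrule⟩ := hr _ _ hs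
    simp only at e1 e2 hrule
    obtain ⟨w0, rfl⟩ := stkOf_surj S0
    have key : ∀ (a : Option (K × A)) (w : List (K × A)), stkOf w = spush a (stkOf w0) → ∀ y,
        PW (fun l => γ (.po (some l))) w y = PW (fun l => γ (.po (some l))) w0 (γ (.po a) y) := by
      intro a w hw y
      cases a with
      | none => rw [h1]; exact PW_congr _ hc _ _ hw y
      | some l => exact PW_congr _ hc w (l :: w0) hw y
    rw [key a w e1, ← hrel _ _ _ (.pf a q), hrel _ _ _ (.rule a q b q' hrule),
      hrel _ _ _ (.ft q')]
    obtain ⟨w1, hw1⟩ := stkOf_surj S'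
    rw [← key b w1 (hw1.trans e2), ih (q := q') (w := w1) (by rw [hw1]; exact hrun),
      ← hrel _ _ _ .st]

/-! ### The countermodel -/

/-- The points of the infinite countermodel. -/
inductive CB (K A : Type) : Type
  | stk (S : K → List A)
  | e (n : ℕ)
  | sink

/-- The number of steps to reach `acc`, as a point. -/
def hitPt {K A C : Type} (step : C → Option C) (acc : C) (c : C) : CB K A :=
  if h : ∃ n, stepN step n c = some acc then .e (Nat.find h) else .sink

/-- Push. -/
def CB.push {K A : Type} (a : Option (K × A)) (x : CB K A) : CB K A :=
  match a, x with
  | none, x => x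
  | some l, .stk S => .stk (spush (some l) S)
  | some _, _ => .sink

/-- Time. -/
def CB.tau {K A : Type} (x : CB K A) : CB K A :=
  match x with
  | .e n => .e (n + 1)
  | _ => .sink

/-- The maps `f`. -/
def CB.f {K A Q : Type} (step : SCfg K A Q → Option (SCfg K A Q)) (acc : SCfg K A Q) (q : Q)
    (x : CB K A) : CB K A :=
  match x with
  | .stk S => hitPt step acc (q, S)
  | _ => .sink

/-- The interpretation of the generators (acting on the right). -/
def CB.phi {K A Q : Type} (step : SCfg K A Q → Option (SCfg K A Q)) (acc : SCfg K A Q)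
    (g : GenT K A Q) (x : CB K A) : CB K A :=
  match g with
  | .po a => CB.push a x
  | .pp l l' => CB.push (some l') (CB.push (some l) x)
  | .f q => CB.f step acc q x
  | .pf a q => CB.f step acc q (CB.push a x)
  | .ft q => CB.tau (CB.f step acc q x)
  | .tau => CB.tau x
  | .s => .sink

theorem CB.push_stk {K A : Type} (a : Option (K × A)) (S : K → List A) :
    CB.push a (.stk S) = .stk (spush a S) := by
  cases a <;> rfl

theorem hitPt_spec {K A C : Type} {step : C → Option C} {acc c : C} {n : ℕ}
    (hn : (hitPt step acc c : CB K A) = .e n) : stepN step n c = some acc := by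
  unfold hitPt at hn
  split_ifs at hn with hx
  injection hn with hn
  rw [← hn]
  exact Nat.find_spec hx

theorem hitPt_step {K A C : Type} {step : C → Option C} {acc c c' : C} (ha : step acc = none)
    (h : step c = some c') : (hitPt step acc c : CB K A) = CB.tau (hitPt step acc c') := by
  have h0 : ¬ stepN step 0 c = some acc := by
    simp only [stepN, Option.some.injEq]
    rintro rfl
    rw [h] at ha; cases ha
  have hs : ∀ n, stepN step (n + 1) c = some acc ↔ stepN step n c' = some acc := by
    intro n; simp [stepN, h]
  have hiff : (∃ n, stepN step n c = some acc) ↔ (∃ n, stepN step n c' = some acc) := by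
    constructor
    · rintro ⟨n, hn⟩
      cases n with
      | zero => exact absurd hn h0
      | succ n => exact ⟨n, (hs n).mp hn⟩
    · rintro ⟨n, hn⟩
      exact ⟨n + 1, (hs n).mpr hn⟩
  unfold hitPt
  by_cases hc : ∃ n, stepN step n c' = some acc
  · have hc' := hiff.mpr hc
    rw [dif_pos hc, dif_pos hc']
    have : Nat.find hc' = Nat.find hc + 1 := by
      rw [Nat.find_eq_iff]
      refine ⟨(hs _).mpr (Nat.find_spec hc), ?_⟩
      intro n hn
      cases n with
      | zero => exact h0
      | succ n => rw [hs]; exact Nat.find_min hc (by omega)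
    rw [this]; rfl
  · rw [dif_neg hc, dif_neg (fun h => hc (hiff.mp h))]; rfl

theorem CB.phi_rel {K A Q : Type} {step : SCfg K A Q → Option (SCfg K A Q)} {acc : SCfg K A Q}
    (ha : step acc = none) {qh : Q} {lr : K × A} (hh : ∀ S, step (qh, S) = none)
    (hne : ∀ S, acc ≠ (qh, spush (some lr) S)) {k g h : GenT K A Q}
    (hrel : GRel step qh lr k g h) (x : CB K A) :
    CB.phi step acc k x = CB.phi step acc h (CB.phi step acc g x) := by
  cases hrel with
  | comm1 l l' => rfl
  | comm2 l l' hl =>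
    cases x <;> simp [CB.phi, CB.push, spush_comm hl]
  | pf a q => rfl
  | ft q => rfl
  | rule a q b q' hr =>
    cases x with
    | stk S =>
      simp only [CB.phi, CB.push_stk, CB.f]
      exact hitPt_step ha (hr S)
    | e n => cases a <;> cases b <;> rfl
    | sink => cases a <;> cases b <;> rfl
  | rej =>
    cases x with
    | stk S =>
      simp only [CB.phi, CB.push_stk, CB.f, hitPt]
      rw [dif_neg]
      rintro ⟨n, hn⟩
      cases n with
      | zero =>
        simp only [stepN, Option.some.injEq] at hn
        exact hne S hn.symm
      | succ n => simp [stepN, hh] at hn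
    | e n => rfl
    | sink => rfl
  | ps l => rfl
  | st => rfl

/-- Total size of a family of stacks. -/
def ssize {K A : Type} [Fintype K] (S : K → List A) : ℕ := ∑ k, (S k).length

theorem ssize_spush {K A : Type} [Fintype K] (l : K × A) (S : K → List A) :
    ssize (spush (some l) S) = ssize S + 1 := by
  unfold ssize
  rw [← Finset.add_sum_erase _ _ (Finset.mem_univ l.1),
    ← Finset.add_sum_erase _ (fun k => (S k).length) (Finset.mem_univ l.1)]
  have e3 : ∑ k' ∈ Finset.univ.erase l.1, (spush (some l) S k').length =
      ∑ k' ∈ Finset.univ.erase l.1, (S k').length :=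
    Finset.sum_congr rfl (fun k' hk' => by
      simp only [spush]
      rw [Function.update_of_ne (Finset.ne_of_mem_erase hk')])
  rw [e3]
  simp [spush]; ring

theorem ssize_step {K A Q : Type} [Fintype K] {step : SCfg K A Q → Option (SCfg K A Q)}
    (hr : IsRuled step) {c c' : SCfg K A Q} (h : step c = some c') :
    ssize c.2 ≤ ssize c'.2 + 1 := by
  obtain ⟨a, b, S, h1, h2, -⟩ := hr c c' h
  rw [h1, h2]
  have h3 : ∀ a : Option (K × A), ssize S ≤ ssize (spush a S) ∧
      ssize (spush a S) ≤ ssize S + 1 := by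
    intro a
    cases a with
    | none => simp [spush]
    | some l => rw [ssize_spush]; omega
  have := h3 a
  have := h3 b
  omega

theorem ssize_stepN {K A Q : Type} [Fintype K] {step : SCfg K A Q → Option (SCfg K A Q)}
    (hr : IsRuled step) {n : ℕ} {c c' : SCfg K A Q} (h : stepN step n c = some c') :
    ssize c.2 ≤ ssize c'.2 + n := by
  induction n generalizing c with
  | zero =>
    simp only [stepN, Option.some.injEq] at h
    subst h; simp
  | succ n ih =>
    simp only [stepN, Option.bind_eq_some_iff] at h
    obtain ⟨d, h1, h2⟩ := h
    have := ih h2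
    have := ssize_step hr h1
    omega

/-- The ideal which is collapsed. -/
def CB.big {K A : Type} [Fintype K] (N T : ℕ) (x : CB K A) : Prop :=
  match x with
  | .stk S => N < ssize S
  | .e n => T < n
  | .sink => True

theorem CB.big_push {K A : Type} [Fintype K] {N T : ℕ} {x : CB K A} (a : Option (K × A))
    (h : x.big N T) : (CB.push a x).big N T := by
  cases a with
  | none => exact h
  | some l =>
    cases x with
    | stk S => simp only [CB.push, CB.big, ssize_spush] at h ⊢; omega
    | e n => trivial
    | sink => trivial

theorem CB.big_tau {K A : Type} [Fintype K] {N T : ℕ} {x : CB K A}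
    (h : x.big N T) : (CB.tau x).big N T := by
  cases x with
  | stk S => trivial
  | e n => simp only [CB.tau, CB.big] at h ⊢; omega
  | sink => trivial

theorem CB.big_f {K A Q : Type} [Fintype K] {step : SCfg K A Q → Option (SCfg K A Q)}
    (hr : IsRuled step) {acc : SCfg K A Q} {N T : ℕ} (hN : ssize acc.2 + T ≤ N) {x : CB K A}
    (q : Q) (h : x.big N T) : (CB.f step acc q x).big N T := by
  cases x with
  | stk S =>
    have hx : ∀ n, (hitPt step acc (q, S) : CB K A) = .e n →
        stepN step n (q, S) = some acc := by
      exact fun n hn => hitPt_spec hn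
    have hy : ∀ S', (hitPt step acc (q, S) : CB K A) ≠ .stk S' := by
      intro S' hS'
      unfold hitPt at hS'
      split_ifs at hS'
    simp only [CB.f]
    rcases he : (hitPt step acc (q, S) : CB K A) with S' | n | _
    · exact absurd he (hy S')
    · have := ssize_stepN hr (hx n he)
      simp only [CB.big] at h ⊢
      simp only at this
      omega
    · trivial
  | e n => trivial
  | sink => trivial

theorem CB.big_phi {K A Q : Type} [Fintype K] {step : SCfg K A Q → Option (SCfg K A Q)}
    (hr : IsRuled step) {acc : SCfg K A Q} {N T : ℕ} (hN : ssize acc.2 + T ≤ N) {x : CB K A}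
    (g : GenT K A Q) (h : x.big N T) : (CB.phi step acc g x).big N T := by
  cases g with
  | po a => exact big_push a h
  | pp l l' => exact big_push _ (big_push _ h)
  | f q => exact big_f hr hN q h
  | pf a q => exact big_f hr hN q (big_push a h)
  | ft q => exact big_tau (big_f hr hN q h)
  | tau => exact big_tau h
  | s => trivial

theorem CB.finite_small {K A : Type} [Fintype K] [Finite A] (N T : ℕ) :
    {x : CB K A | ¬ x.big N T}.Finite := by
  have h1 : {S : K → List A | ∀ k, (S k) ∈ {l : List A | l.length ≤ N}}.Finite := by
    have := Set.Finite.pi' (fun _ : K => List.finite_length_le A N)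
    exact this
  refine ((h1.image CB.stk).union ((Set.finite_Iic T).image CB.e)).subset ?_
  intro x hx
  cases x with
  | stk S =>
    left
    refine ⟨S, fun k => ?_, rfl⟩
    simp only [Set.mem_ofPred_eq, CB.big, not_lt] at hx ⊢
    exact (Finset.single_le_sum (f := fun k => (S k).length) (fun _ _ => Nat.zero_le _) (Finset.mem_univ k)).trans hx
  | e n =>
    right
    refine ⟨n, ?_, rfl⟩
    simpa [CB.big] using hx
  | sink => exact absurd trivial hx

/-- Completeness from an infinite model with a cofinite ideal. -/
theorem cINST_complete_ideal {B : Type} (I : B → Prop) (z : B) (hz : I z) (hI : {x | ¬ I x}.Finite)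
    (φ : ℕ → B → B) (hφ : ∀ n x, I x → I (φ n x)) {m u s : ℕ}
    {R : List (ℕ × ℕ × ℕ)} (h0 : ∀ x, φ 0 x = x)
    (hR : ∀ t ∈ R, ∀ x, φ t.1 x = φ t.2.2 (φ t.2.1 x))
    (b : B) (hu : ¬ I (φ u b)) (hs : I (φ s b)) : ¬ CIHolds (cINST m u s R) := by
  let c : B → B := fun x => if I x then z else x
  have hc1 : ∀ x, I x → c x = z := fun x h => by simp [c, h]
  have hc2 : ∀ x, ¬ I x → c x = x := fun x h => by simp [c, h]
  have hcφ : ∀ n x, c (φ n (c x)) = c (φ n x) := by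
    intro n x
    by_cases h : I x
    · rw [hc1 x h, hc1 _ (hφ n x h), hc1 _ (hφ n z hz)]
    · rw [hc2 x h]
  have hcc : ∀ x, c (c x) = c x := by
    intro x
    by_cases h : I x
    · rw [hc1 x h, hc1 z hz]
    · rw [hc2 x h, hc2 x h]
  have hfin : Finite {x : B // c x = x} := by
    refine ((hI.union (Set.finite_singleton z)).subset (t := {x | c x = x}) ?_).to_subtype
    intro x hx
    by_cases h : I x
    · right
      have : c x = x := hx
      rw [hc1 x h] at this
      exact this.symm
    · exact Or.inl h
  refine cINST_complete (B := {x : B // c x = x}) (fun n x => ⟨c (φ n x), hcc _⟩) ?_ ?_ ?_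
  · funext x
    apply Subtype.ext
    simp [h0, x.2]
  · intro t ht
    funext x
    apply Subtype.ext
    simp only [Function.comp]
    rw [hcφ, hR t ht]
  · intro h
    have h1 := congrArg Subtype.val (congrFun h ⟨c b, hcc b⟩)
    simp only [hcφ] at h1
    rw [hc1 _ hs, hc2 _ hu] at h1
    rw [h1] at hu
    exact hu hz

/-- The relations of the chain of generators coding the initial configuration. -/
def chainR (m0 f0 : ℕ) (v : ℕ → ℕ) (n : ℕ) : List (ℕ × ℕ × ℕ) :=
  (m0, 0, f0) :: (List.range n).map (fun i => (m0 + i + 1, v i, m0 + i))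

/-- The instances attached to a machine. -/
theorem machine_inst {K A Q : Type} [Finite K] [Finite A] [Finite Q]
    {step : SCfg K A Q → Option (SCfg K A Q)} (hr : IsRuled step) {qh : Q} {lr : K × A}
    (hh : ∀ S, step (qh, S) = none) {Sa : K → List A} (hne : ∀ S, Sa ≠ spush (some lr) S)
    (q0 : Q) :
    ∃ (m0 : ℕ) (R0 : List (ℕ × ℕ × ℕ)) (ip : K × A → ℕ) (f0 s : ℕ), ∀ (w : ℕ → K × A) (n : ℕ),
      CIValid (cINST (m0 + n + 1) (m0 + n) s (R0 ++ chainR m0 f0 (fun i => ip (w i)) n)) ∧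
      (∀ N S, stepN step N (q0, stkOf ((List.range n).map w)) = some (qh, spush (some lr) S) →
        CIHolds (cINST (m0 + n + 1) (m0 + n) s (R0 ++ chainR m0 f0 (fun i => ip (w i)) n))) ∧
      (∀ N, stepN step N (q0, stkOf ((List.range n).map w)) = some (qh, Sa) →
        ¬ CIHolds (cINST (m0 + n + 1) (m0 + n) s (R0 ++ chainR m0 f0 (fun i => ip (w i)) n))) := by
  have := Fintype.ofFinite K
  obtain ⟨m0, ⟨e0⟩⟩ := Finite.exists_equiv_fin (GenT K A Q)
  have hm0 : 0 < m0 := Fin.pos (e0 (.po none))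
  let e : GenT K A Q ≃ Fin m0 := e0.trans (Equiv.swap (e0 (.po none)) ⟨0, hm0⟩)
  have he : e (.po none) = ⟨0, hm0⟩ := by simp [e]
  let gi : GenT K A Q → ℕ := fun g => (e g).val
  have hgi : ∀ g, gi g < m0 := fun g => (e g).isLt
  have hg0 : gi (.po none) = 0 := by simp [gi, he]
  let dec : ℕ → GenT K A Q := fun n => if h : n < m0 then e.symm ⟨n, h⟩ else .po none
  have hdec : ∀ g, dec (gi g) = g := by
    intro g
    simp [dec, gi]
  have := Fintype.ofFinite (GenT K A Q)
  let R0 : List (ℕ × ℕ × ℕ) := ((Finset.univ.filter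
    (fun t : GenT K A Q × GenT K A Q × GenT K A Q => GRel step qh lr t.1 t.2.1 t.2.2)).toList).map
      (fun t => (gi t.1, gi t.2.1, gi t.2.2))
  have hR0 : ∀ t, t ∈ R0 ↔ ∃ k g h, GRel step qh lr k g h ∧ t = (gi k, gi g, gi h) := by
    intro t
    simp only [R0, List.mem_map, Finset.mem_toList, Finset.mem_filter, Finset.mem_univ, true_and]
    constructor
    · rintro ⟨⟨k, g, h⟩, h1, rfl⟩
      exact ⟨k, g, h, h1, rfl⟩
    · rintro ⟨k, g, h, h1, rfl⟩
      exact ⟨⟨k, g, h⟩, h1, rfl⟩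
  refine ⟨m0, R0, fun l => gi (.po (some l)), gi (.f q0), gi .s, fun w n => ?_⟩
  have hmem : ∀ t, t ∈ R0 ++ chainR m0 (gi (.f q0)) (fun i => gi (.po (some (w i)))) n ↔
      (∃ k g h, GRel step qh lr k g h ∧ t = (gi k, gi g, gi h)) ∨ t = (m0, 0, gi (.f q0)) ∨
      ∃ i < n, t = (m0 + i + 1, gi (.po (some (w i))), m0 + i) := by
    intro t
    rw [List.mem_append, hR0]
    simp only [chainR, List.mem_cons, List.mem_map, List.mem_range]
    constructor
    · rintro (h | h | ⟨i, hi, rfl⟩)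
      · exact Or.inl h
      · exact Or.inr (Or.inl h)
      · exact Or.inr (Or.inr ⟨i, hi, rfl⟩)
    · rintro (h | h | ⟨i, hi, rfl⟩)
      · exact Or.inl h
      · exact Or.inr (Or.inl h)
      · exact Or.inr (Or.inr ⟨i, hi, rfl⟩)
  set R := R0 ++ chainR m0 (gi (.f q0)) (fun i => gi (.po (some (w i)))) n with hRdef
  have hbd : ∀ t ∈ R, t.1 < m0 + n + 1 ∧ t.2.1 < m0 + n + 1 ∧ t.2.2 < m0 + n + 1 := by
    intro t ht
    rcases (hmem t).mp ht with ⟨k, g, h, -, rfl⟩ | rfl | ⟨i, hi, rfl⟩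
    · have h1 := hgi k
      have h2 := hgi g
      have h3 := hgi h
      simp only
      omega
    · have h1 := hgi (.f q0)
      simp only
      omega
    · have h1 := hgi (.po (some (w i)))
      simp only
      omega
  have hsb : gi .s < m0 + n + 1 := by
    have := hgi .s
    omega
  refine ⟨cINST_valid (by omega) hsb hbd, ?_, ?_⟩
  · intro N S hN
    refine cINST_sound (by omega) hsb hbd ?_
    intro V g hg
    have hchain : ∀ i ≤ n, ∀ x, g (m0 + i) x =
        PW (fun l => g (gi (.po (some l)))) ((List.range i).map w) (g (gi (.f q0)) x) := by
      intro i
      induction i with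
      | zero =>
        intro _ x
        have := hg.2 (m0, 0, gi (.f q0)) ((hmem _).mpr (Or.inr (Or.inl rfl))) x
        simp only [hg.1] at this
        simpa [PW] using this
      | succ i ih =>
        intro hi x
        have := hg.2 (m0 + i + 1, gi (.po (some (w i))), m0 + i)
          ((hmem _).mpr (Or.inr (Or.inr ⟨i, by omega, rfl⟩))) x
        simp only at this
        rw [← add_assoc, this, ih (by omega)]
        simp [List.range_succ, PW]
    funext x
    rw [hchain n le_rfl]
    refine machine_sound hr (fun k => g (gi k)) ?_ ?_ hN x
    · intro x
      rw [hg0]; exact hg.1 x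
    · intro k g' h hrel x
      exact hg.2 (gi k, gi g', gi h) ((hmem _).mpr (Or.inl ⟨k, g', h, hrel, rfl⟩)) x
  · intro T hT
    let φ0 := CB.phi step (qh, Sa)
    let Pn : ℕ → CB K A → CB K A := fun i x =>
      ((List.range i).map w).foldr (fun l y => CB.push (some l) y) x
    let φ : ℕ → CB K A → CB K A := fun k x =>
      if k < m0 then φ0 (dec k) x else φ0 (.f q0) (Pn (k - m0) x)
    have hφg : ∀ g x, φ (gi g) x = φ0 g x := by
      intro g x
      simp only [φ, hgi, if_true, hdec]
    have hφc : ∀ i x, φ (m0 + i) x = φ0 (.f q0) (Pn i x) := by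
      intro i x
      simp [φ]
    have hφ0 : ∀ x, φ 0 x = x := by
      intro x
      have := hφg (.po none) x
      rw [hg0] at this
      rw [this]; rfl
    have hPn : ∀ i S, Pn i (.stk S) = .stk (((List.range i).map w).foldr
        (fun l y => spush (some l) y) S) := by
      intro i S
      simp only [Pn]
      induction (List.range i).map w with
      | nil => rfl
      | cons l t ih => simp only [List.foldr_cons, ih]; rfl
    -- the hitting time
    have hhit : ∃ T', hitPt step (qh, Sa) (q0, stkOf ((List.range n).map w)) =
        (CB.e T' : CB K A) := by
      unfold hitPt
      rw [dif_pos ⟨T, hT⟩]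
      exact ⟨_, rfl⟩
    obtain ⟨T', hT'⟩ := hhit
    have hbig : ∀ g x, CB.big (ssize Sa + T') T' x → CB.big (ssize Sa + T') T' (φ0 g x) :=
      fun g x hx => CB.big_phi hr (acc := (qh, Sa)) le_rfl g hx
    have hbigP : ∀ i x, CB.big (ssize Sa + T') T' x → CB.big (ssize Sa + T') T' (Pn i x) := by
      intro i x hx
      simp only [Pn]
      induction (List.range i).map w with
      | nil => exact hx
      | cons l t ih => exact CB.big_push (some l) ih
    refine cINST_complete_ideal (CB.big (ssize Sa + T') T') .sink trivial
      (CB.finite_small _ _) φ ?_ hφ0 ?_ (.stk (fun _ => [])) ?_ ?_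
    · intro k x hx
      simp only [φ]
      split_ifs
      · exact hbig _ _ hx
      · exact hbig _ _ (hbigP _ _ hx)
    · intro t ht x
      rcases (hmem t).mp ht with ⟨k, g, h, hrel, rfl⟩ | rfl | ⟨i, hi, rfl⟩
      · simp only [hφg]
        exact CB.phi_rel (hh Sa) hh (fun S h => hne S (Prod.ext_iff.mp h).2) hrel x
      · simp only [hφ0, hφg]
        exact hφc 0 x
      · simp only [hφg, hφc]
        have := hφc (i + 1) x
        rw [← add_assoc] at this
        rw [this]
        simp [Pn, List.range_succ, φ0, CB.phi]
    · rw [hφc, hPn]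
      change ¬ CB.big _ _ (hitPt step (qh, Sa) (q0, stkOf ((List.range n).map w)))
      rw [hT']
      simp [CB.big]
    · rw [hφg]
      trivial

/-! ### Small-step semantics of `TM2` machines -/

open Turing in
theorem spush_some {K A : Type} [DecidableEq K] (l : K × A) (S : K → List A) :
    spush (some l) S = Function.update S l.1 (l.2 :: S l.1) := by
  ext1 k
  by_cases h : k = l.1
  · subst h; simp [spush]
  · simp [spush, h]

theorem stepN_trans {C : Type} {step : C → Option C} {m n : ℕ} {c d e : C}
    (h1 : stepN step m c = some d) (h2 : stepN step n d = some e) :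
    stepN step (m + n) c = some e := by
  induction m generalizing c with
  | zero =>
    simp only [stepN, Option.some.injEq] at h1
    subst h1
    simpa using h2
  | succ m ih =>
    simp only [stepN, Option.bind_eq_some_iff] at h1
    obtain ⟨x, hx, h1⟩ := h1
    rw [Nat.add_right_comm]
    simp [stepN, hx, ih h1]

/-- Restriction of a machine to a closed set of states. -/
def restrStep {K A Q : Type} (F : Set Q) (step : SCfg K A Q → Option (SCfg K A Q))
    (c : SCfg K A F) : Option (SCfg K A F) :=
  if h : ∃ c' : SCfg K A F, step (c.1.1, c.2) = some (c'.1.1, c'.2) then some h.choose else none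

theorem restrStep_iff {K A Q : Type} (F : Set Q) (step : SCfg K A Q → Option (SCfg K A Q))
    (c c' : SCfg K A F) :
    restrStep F step c = some c' ↔ step (c.1.1, c.2) = some (c'.1.1, c'.2) := by
  unfold restrStep
  constructor
  · intro h
    split_ifs at h with hx
    simp only [Option.some.injEq] at h
    rw [← h]
    exact hx.choose_spec
  · intro h
    have hx : ∃ c' : SCfg K A F, step (c.1.1, c.2) = some (c'.1.1, c'.2) := ⟨c', h⟩
    rw [dif_pos hx]
    have := h.symm.trans hx.choose_spec
    simp only [Option.some.injEq, Prod.mk.injEq] at this ⊢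
    exact Prod.ext (Subtype.ext this.1.symm) this.2.symm

theorem restrStep_ruled {K A Q : Type} (F : Set Q) {step : SCfg K A Q → Option (SCfg K A Q)}
    (hr : IsRuled step) : IsRuled (restrStep F step) := by
  intro c c' h
  rw [restrStep_iff] at h
  obtain ⟨a, b, S, h1, h2, h3⟩ := hr _ _ h
  refine ⟨a, b, S, h1, h2, fun S' => ?_⟩
  rw [restrStep_iff]
  exact h3 S'

theorem restrStep_N {K A Q : Type} (F : Set Q) {step : SCfg K A Q → Option (SCfg K A Q)}
    (hF : ∀ c c', step c = some c' → c.1 ∈ F → c'.1 ∈ F) {n : ℕ} {c c' : SCfg K A F}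
    (h : stepN step n (c.1.1, c.2) = some (c'.1.1, c'.2)) :
    stepN (restrStep F step) n c = some c' := by
  induction n generalizing c with
  | zero =>
    simp only [stepN, Option.some.injEq, Prod.mk.injEq] at h ⊢
    exact Prod.ext (Subtype.ext h.1) h.2
  | succ n ih =>
    simp only [stepN, Option.bind_eq_some_iff] at h ⊢
    obtain ⟨⟨q, S⟩, hx, h⟩ := h
    refine ⟨(⟨q, hF _ _ hx c.1.2⟩, S), ?_, ih h⟩
    rw [restrStep_iff]
    exact hx

section
open Turing
variable {K Γ Λ σ : Type} [DecidableEq K]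

/-- Small steps of a `TM2` machine, with stacks having bottom markers `none`. -/
def micro (M : Λ → TM2.Stmt (fun _ : K => Γ) Λ σ) :
    SCfg K (Option Γ) (TM2.Stmt (fun _ : K => Γ) Λ σ × σ) →
      Option (SCfg K (Option Γ) (TM2.Stmt (fun _ : K => Γ) Λ σ × σ))
  | ((.push k f q, v), S) => some ((q, v), spush (some (k, some (f v))) S)
  | ((.peek k f q, v), S) =>
    match S k with
    | [] => none
    | a :: _ => some ((q, f v a), S)
  | ((.pop k f q, v), S) =>
    match S k with
    | [] => none
    | none :: _ => some ((q, f v none), S)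
    | some a :: t => some ((q, f v (some a)), Function.update S k t)
  | ((.load a q, v), S) => some ((q, a v), S)
  | ((.branch p q q', v), S) => some ((cond (p v) q q', v), S)
  | ((.goto l, v), S) => some ((M (l v), v), S)
  | ((.halt, _), _) => none

theorem eq_spush {A : Type} {S : K → List A} {k : K} {a : A} {t : List A} (h : S k = a :: t) :
    S = spush (some (k, a)) (Function.update S k t) := by
  rw [spush_some]
  simp [← h]

theorem spush_self {A : Type} (S : K → List A) (k : K) (a : A) :
    spush (some (k, a)) S k = a :: S k := by
  simp [spush]

theorem micro_ruled (M : Λ → TM2.Stmt (fun _ : K => Γ) Λ σ) : IsRuled (micro M) := by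
  rintro ⟨⟨q, v⟩, S⟩ ⟨⟨q', v'⟩, S'⟩ h
  cases q with
  | push k f q =>
    simp only [micro, Option.some.injEq, Prod.mk.injEq] at h
    obtain ⟨⟨rfl, rfl⟩, rfl⟩ := h
    exact ⟨none, some (k, some (f v)), S, rfl, rfl, fun S => rfl⟩
  | peek k f q =>
    simp only [micro] at h
    split at h
    · cases h
    · rename_i a t hS
      simp only [Option.some.injEq, Prod.mk.injEq] at h
      obtain ⟨⟨rfl, rfl⟩, rfl⟩ := h
      refine ⟨some (k, a), some (k, a), _, eq_spush hS, eq_spush hS, fun S => ?_⟩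
      simp only [micro, spush_self]
  | pop k f q =>
    simp only [micro] at h
    split at h
    · cases h
    · rename_i t hS
      simp only [Option.some.injEq, Prod.mk.injEq] at h
      obtain ⟨⟨rfl, rfl⟩, rfl⟩ := h
      refine ⟨some (k, none), some (k, none), _, eq_spush hS, eq_spush hS, fun S => ?_⟩
      simp only [micro, spush_self]
    · rename_i a t hS
      simp only [Option.some.injEq, Prod.mk.injEq] at h
      obtain ⟨⟨rfl, rfl⟩, rfl⟩ := h
      refine ⟨some (k, some a), none, _, eq_spush hS, rfl, fun S => ?_⟩
      simp only [micro, spush_self]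
      rw [spush_some]
      simp [spush]
  | load a q =>
    simp only [micro, Option.some.injEq, Prod.mk.injEq] at h
    obtain ⟨⟨rfl, rfl⟩, rfl⟩ := h
    exact ⟨none, none, S, rfl, rfl, fun S => rfl⟩
  | branch p q q' =>
    simp only [micro, Option.some.injEq, Prod.mk.injEq] at h
    obtain ⟨⟨rfl, rfl⟩, rfl⟩ := h
    exact ⟨none, none, S, rfl, rfl, fun S => rfl⟩
  | goto l =>
    simp only [micro, Option.some.injEq, Prod.mk.injEq] at h
    obtain ⟨⟨rfl, rfl⟩, rfl⟩ := h
    exact ⟨none, none, S, rfl, rfl, fun S => rfl⟩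
  | halt => simp [micro] at h

/-- Stacks with bottom markers. -/
def encS (S : K → List Γ) : K → List (Option Γ) := fun k => (S k).map some ++ [none]

/-- The small-step configuration of a configuration. -/
def confOf (M : Λ → TM2.Stmt (fun _ : K => Γ) Λ σ) (c : TM2.Cfg (fun _ : K => Γ) Λ σ) :
    SCfg K (Option Γ) (TM2.Stmt (fun _ : K => Γ) Λ σ × σ) :=
  match c with
  | ⟨some l, v, S⟩ => ((M l, v), encS S)
  | ⟨none, v, S⟩ => ((.halt, v), encS S)

theorem encS_update (S : K → List Γ) (k : K) (t : List Γ) :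
    encS (Function.update S k t) = Function.update (encS S) k (t.map some ++ [none]) := by
  ext1 k'
  by_cases h : k' = k
  · subst h; simp [encS]
  · simp [encS, h]

theorem micro_stepAux (M : Λ → TM2.Stmt (fun _ : K => Γ) Λ σ)
    (q : TM2.Stmt (fun _ : K => Γ) Λ σ) (v : σ) (S : K → List Γ) :
    ∃ n, stepN (micro M) n ((q, v), encS S) = some (confOf M (TM2.stepAux q v S)) := by
  induction q generalizing v S with
  | push k f q ih =>
    obtain ⟨n, hn⟩ := ih v (Function.update S k (f v :: S k))
    refine ⟨n + 1, ?_⟩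
    rw [TM2.stepAux, ← hn]
    simp only [stepN, micro, Option.bind_some]
    rw [spush_some, encS_update]
    rfl
  | peek k f q ih =>
    obtain ⟨n, hn⟩ := ih (f v (S k).head?) S
    refine ⟨n + 1, ?_⟩
    rw [TM2.stepAux, ← hn]
    simp only [stepN, micro]
    rcases h : S k with _ | ⟨a, t⟩ <;> simp [encS, h]
  | pop k f q ih =>
    obtain ⟨n, hn⟩ := ih (f v (S k).head?) (Function.update S k (S k).tail)
    refine ⟨n + 1, ?_⟩
    rw [TM2.stepAux, ← hn]
    simp only [stepN, micro]
    rcases h : S k with _ | ⟨a, t⟩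
    · have h1 : encS S k = [none] := by simp [encS, h]
      have h2 : Function.update S k [] = S := by rw [← h]; simp
      simp only [h1, List.tail_nil, List.head?_nil, h2, Option.bind_some]
    · have h1 : encS S k = some a :: (t.map some ++ [none]) := by simp [encS, h]
      simp only [h1, List.tail_cons, List.head?_cons, Option.bind_some]
      rw [encS_update]
  | load a q ih =>
    obtain ⟨n, hn⟩ := ih (a v) S
    exact ⟨n + 1, hn⟩
  | branch p q q' ih ih' =>
    rcases h : p v with _ | _
    · obtain ⟨n, hn⟩ := ih' v S
      refine ⟨n + 1, ?_⟩
      simp [stepN, micro, h, hn]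
    · obtain ⟨n, hn⟩ := ih v S
      refine ⟨n + 1, ?_⟩
      simp [stepN, micro, h, hn]
  | goto l => exact ⟨1, rfl⟩
  | halt => exact ⟨0, rfl⟩

theorem micro_reaches (M : Λ → TM2.Stmt (fun _ : K => Γ) Λ σ)
    {c c' : TM2.Cfg (fun _ : K => Γ) Λ σ} (h : StateTransition.Reaches (TM2.step M) c c') :
    ∃ n, stepN (micro M) n (confOf M c) = some (confOf M c') := by
  induction h with
  | refl => exact ⟨0, rfl⟩
  | @tail d e _ h ih =>
    obtain ⟨n, hn⟩ := ih
    rcases d with ⟨_ | l, v, S⟩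
    · simp at h
    · simp only [TM2.step, Option.mem_def, Option.some.injEq] at h
      subst h
      obtain ⟨m, hm⟩ := micro_stepAux M (M l) v S
      exact ⟨n + m, stepN_trans hn hm⟩

/-- The states of the restricted machine. -/
def mStates (M : Λ → TM2.Stmt (fun _ : K => Γ) Λ σ) (S : Finset Λ) :
    Set (TM2.Stmt (fun _ : K => Γ) Λ σ × σ) :=
  {q | q.1 = .halt ∨ some q.1 ∈ TM2.stmts M S}

theorem mStates_finite [Finite σ] (M : Λ → TM2.Stmt (fun _ : K => Γ) Λ σ) (S : Finset Λ) :
    (mStates M S).Finite := by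
  have h1 : {q : TM2.Stmt (fun _ : K => Γ) Λ σ | q = .halt ∨ some q ∈ TM2.stmts M S}.Finite := by
    refine (Set.finite_singleton _).union ?_
    exact (Finset.finite_toSet (TM2.stmts M S)).preimage
      (fun a _ b _ h => Option.some.inj h)
  exact (h1.prod (Set.finite_univ (α := σ))).subset (fun q hq => ⟨hq, trivial⟩)

theorem mStates_closed [Inhabited Λ] {M : Λ → TM2.Stmt (fun _ : K => Γ) Λ σ} {S : Finset Λ}
    (hS : TM2.Supports M S) (c c') (h : micro M c = some c') (hc : c.1 ∈ mStates M S) :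
    c'.1 ∈ mStates M S := by
  obtain ⟨⟨q, v⟩, T⟩ := c
  obtain ⟨⟨q', v'⟩, T'⟩ := c'
  have hq : q = .halt ∨ some q ∈ TM2.stmts M S := hc
  rcases hq with rfl | hq
  · simp [micro] at h
  · right
    change some q' ∈ TM2.stmts M S
    have sub : ∀ q₁ : TM2.Stmt (fun _ : K => Γ) Λ σ, q₁ ∈ TM2.stmts₁ q → some q₁ ∈ TM2.stmts M S :=
      fun q₁ h => TM2.stmts_trans h hq
    cases q with
    | push k f q =>
      simp only [micro, Option.some.injEq, Prod.mk.injEq] at h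
      rw [← h.1.1]
      exact sub _ (by simp [TM2.stmts₁, TM2.stmts₁_self])
    | peek k f q =>
      simp only [micro] at h
      split at h
      · cases h
      · simp only [Option.some.injEq, Prod.mk.injEq] at h
        rw [← h.1.1]
        exact sub _ (by simp [TM2.stmts₁, TM2.stmts₁_self])
    | pop k f q =>
      simp only [micro] at h
      split at h
      · cases h
      · simp only [Option.some.injEq, Prod.mk.injEq] at h
        rw [← h.1.1]
        exact sub _ (by simp [TM2.stmts₁, TM2.stmts₁_self])
      · simp only [Option.some.injEq, Prod.mk.injEq] at h
        rw [← h.1.1]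
        exact sub _ (by simp [TM2.stmts₁, TM2.stmts₁_self])
    | load a q =>
      simp only [micro, Option.some.injEq, Prod.mk.injEq] at h
      rw [← h.1.1]
      exact sub _ (by simp [TM2.stmts₁, TM2.stmts₁_self])
    | branch p q₁ q₂ =>
      simp only [micro, Option.some.injEq, Prod.mk.injEq] at h
      rw [← h.1.1]
      apply sub
      rcases p v <;> simp [TM2.stmts₁, TM2.stmts₁_self]
    | goto l =>
      simp only [micro, Option.some.injEq, Prod.mk.injEq] at h
      rw [← h.1.1]
      have := TM2.stmts_supportsStmt hS hq v
      simp only [TM2.stmts, Finset.some_mem_insertNone, Finset.mem_biUnion]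
      exact ⟨_, this, TM2.stmts₁_self⟩
    | halt => simp [micro] at h

end

/-! ### Instances attached to a partial recursive code -/

section
open Turing Turing.PartrecToTM2 Turing.ToPartrec

/-- The last letters of the word describing the input `2 ^ j`. -/
def tailW : List (K' × Option Γ') :=
  [(K'.main, some Γ'.bit1), (K'.main, some Γ'.cons), (K'.main, none), (K'.rev, none),
    (K'.aux, none), (K'.stack, none)]

/-- The word describing the input `2 ^ j`. -/
def inW (j i : ℕ) : K' × Option Γ' :=
  if i < j then (K'.main, some Γ'.bit0) else tailW.getD (i - j) (K'.main, none)

theorem inW_map (j : ℕ) : (List.range (j + 6)).map (inW j) =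
    List.replicate j (K'.main, some Γ'.bit0) ++ tailW := by
  rw [List.range_add, List.map_append, List.map_map]
  congr 1
  · rw [List.eq_replicate_iff]
    refine ⟨by simp, fun b hb => ?_⟩
    simp only [List.mem_map, List.mem_range] at hb
    obtain ⟨i, hi, rfl⟩ := hb
    simp [inW, hi]
  · simp [List.range_succ, inW, tailW]

theorem trNat_two_pow (j : ℕ) : trNat (2 ^ j) = List.replicate j Γ'.bit0 ++ [Γ'.bit1] := by
  have h : ∀ j : ℕ, ∃ p : PosNum, ((2 ^ j : ℕ) : Num) = Num.pos p ∧
      trPosNum p = List.replicate j Γ'.bit0 ++ [Γ'.bit1] := by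
    intro j
    induction j with
    | zero => exact ⟨PosNum.one, rfl, rfl⟩
    | succ j ih =>
      obtain ⟨p, h1, h2⟩ := ih
      refine ⟨p.bit0, ?_, ?_⟩
      · rw [pow_succ, mul_two, Nat.cast_add, h1]
        have := Num.bit0_of_bit0 (Num.pos p)
        rw [this]
        rfl
      · simp [trPosNum, h2, List.replicate_succ]
  obtain ⟨p, h1, h2⟩ := h j
  rw [trNat, h1, trNum, h2]

theorem inW_stk (j : ℕ) : stkOf ((List.range (j + 6)).map (inW j)) =
    encS (K'.elim (trList [2 ^ j]) [] [] []) := by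
  rw [inW_map]
  have h0 : stkOf tailW = encS (K'.elim [Γ'.bit1, Γ'.cons] [] [] []) := by
    ext1 k
    cases k <;> simp [stkOf, tailW, spush, encS]
  have h : ∀ j : ℕ, stkOf (List.replicate j (K'.main, some Γ'.bit0) ++ tailW) =
      encS (K'.elim (List.replicate j Γ'.bit0 ++ [Γ'.bit1, Γ'.cons]) [] [] []) := by
    intro j
    induction j with
    | zero => simpa using h0
    | succ j ih =>
      rw [List.replicate_succ, List.cons_append]
      have : stkOf ((K'.main, some Γ'.bit0) :: (List.replicate j (K'.main, some Γ'.bit0) ++ tailW))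
        = spush (some (K'.main, some Γ'.bit0))
          (stkOf (List.replicate j (K'.main, some Γ'.bit0) ++ tailW)) := rfl
      rw [this, ih]
      ext1 k
      cases k <;> simp [spush, encS, List.replicate_succ]
  rw [h]
  simp [trList, trNat_two_pow]

theorem K'_finite : Finite K' := by
  refine Finite.of_surjective (fun i : Fin 4 =>
    match i with
    | 0 => K'.main
    | 1 => K'.rev
    | 2 => K'.aux
    | 3 => K'.stack) ?_
  intro k
  cases k
  · exact ⟨0, rfl⟩
  · exact ⟨1, rfl⟩
  · exact ⟨2, rfl⟩
  · exact ⟨3, rfl⟩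

theorem code_inst (c : Code) :
    ∃ (m0 : ℕ) (R0 : List (ℕ × ℕ × ℕ)) (ip : K' × Option Γ' → ℕ) (f0 s : ℕ), ∀ j : ℕ,
      CIValid (cINST (m0 + (j + 6) + 1) (m0 + (j + 6)) s
        (R0 ++ chainR m0 f0 (fun i => ip (inW j i)) (j + 6))) ∧
      ([0] ∈ c.eval [2 ^ j] → CIHolds (cINST (m0 + (j + 6) + 1) (m0 + (j + 6)) s
        (R0 ++ chainR m0 f0 (fun i => ip (inW j i)) (j + 6)))) ∧
      ([1] ∈ c.eval [2 ^ j] → ¬ CIHolds (cINST (m0 + (j + 6) + 1) (m0 + (j + 6)) s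
        (R0 ++ chainR m0 f0 (fun i => ip (inW j i)) (j + 6)))) := by
  have := K'_finite
  let M : Λ' → TM2.Stmt (fun _ : K' => Γ') Λ' (Option Γ') := tr
  let F := mStates M (codeSupp c Cont'.halt)
  have hsupp := tr_supports c Cont'.halt
  have hF : ∀ c c', micro M c = some c' → c.1 ∈ F → c'.1 ∈ F :=
    @mStates_closed K' Γ' Λ' (Option Γ') _ ⟨trNormal c Cont'.halt⟩ M _ hsupp
  have : Finite F := (mStates_finite M _).to_subtype
  let qh : F := ⟨(TM2.Stmt.halt, none), Or.inl rfl⟩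
  let q0 : F := ⟨(M (trNormal c Cont'.halt), none), by
    right
    simp only [TM2.stmts, Finset.some_mem_insertNone, Finset.mem_biUnion]
    exact ⟨_, codeSupp_self _ _ (trStmts₁_self _), TM2.stmts₁_self⟩⟩
  obtain ⟨m0, R0, ip, f0, s, H⟩ := machine_inst (restrStep_ruled F (micro_ruled M)) (qh := qh)
    (lr := (K'.main, some Γ'.cons)) (Sa := encS (K'.elim (trList [1]) [] [] []))
    (by
      intro S
      rcases h : restrStep F (micro M) (qh, S) with _ | d
      · rfl
      · rw [restrStep_iff] at h
        simp [qh, micro] at h)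
    (by
      intro S h
      have := congrFun h K'.main
      have h1 : trNat 1 = [Γ'.bit1] := trNat_two_pow 0
      simp [encS, spush, trList, h1] at this)
    q0
  refine ⟨m0, R0, ip, f0, s, fun j => ?_⟩
  obtain ⟨H1, H2, H3⟩ := H (inW j) (j + 6)
  have key : ∀ v, v ∈ c.eval [2 ^ j] → ∃ n, stepN (restrStep F (micro M)) n
      (q0, stkOf ((List.range (j + 6)).map (inW j))) =
        some (qh, encS (K'.elim (trList v) [] [] [])) := by
    intro v hv
    have h1 : PartrecToTM2.halt v ∈ PartrecToTM2.halt <$> c.eval [2 ^ j] := Part.mem_map _ hv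
    rw [← tr_eval] at h1
    have h2 := (StateTransition.mem_eval.mp h1).1
    obtain ⟨n, hn⟩ := micro_reaches M h2
    refine ⟨n, restrStep_N F hF ?_⟩
    rw [inW_stk]
    exact hn
  refine ⟨H1, fun h => ?_, fun h => ?_⟩
  · obtain ⟨n, hn⟩ := key _ h
    refine H2 n (encS (K'.elim [] [] [] [])) (hn.trans ?_)
    congr 2
    ext1 k
    cases k <;> simp [encS, spush, trList]
  · obtain ⟨n, hn⟩ := key _ h
    exact H3 n hn

end

/-! ### Recursively inseparable sets -/

/-- The diagonal function, with values truncated to `0` or `1`. -/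
def diagF (n : ℕ) : Part ℕ :=
  (Nat.Partrec.Code.eval (Denumerable.ofNat Nat.Partrec.Code n) n).map (fun x => min x 1)

theorem diagF_partrec : Partrec diagF := by
  have h : Partrec (fun n : ℕ => Nat.Partrec.Code.eval (Denumerable.ofNat Nat.Partrec.Code n) n) :=
    Nat.Partrec.Code.eval_part.comp (Computable.ofNat Nat.Partrec.Code) Computable.id
  exact h.map ((Primrec.nat_min.comp Primrec.snd (Primrec.const 1)).to_comp).to₂

theorem diagF_insep (f : ℕ → Bool) (hf : Computable f) (h0 : ∀ n, 0 ∈ diagF n → f n = true)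
    (h1 : ∀ n, 1 ∈ diagF n → f n = false) : False := by
  have hg : Computable (fun n => cond (f n) 1 0 : ℕ → ℕ) :=
    Computable.cond hf (Computable.const 1) (Computable.const 0)
  obtain ⟨c, hc⟩ := Nat.Partrec.Code.exists_code.1 (Partrec.nat_iff.1 hg.partrec)
  have hd : diagF (Encodable.encode c) = Part.some (cond (f (Encodable.encode c)) 1 0) := by
    rw [diagF, Denumerable.ofNat_encode, hc]
    rcases h : f (Encodable.encode c) <;> simp [h]
  rcases h : f (Encodable.encode c) with _ | _
  · have := h0 (Encodable.encode c) (by rw [hd, h]; simp)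
    simp [h] at this
  · have := h1 (Encodable.encode c) (by rw [hd, h]; simp)
    simp [h] at this

/-- A primitive recursive base two logarithm. -/
def lgF (n : ℕ) : ℕ := Nat.findGreatest (fun j => 2 ^ j ≤ n) n

theorem lgF_primrec : Primrec lgF := by
  have hp : Primrec₂ ((· ^ ·) : ℕ → ℕ → ℕ) := Primrec₂.unpaired'.1 Nat.Primrec.pow
  have h : PrimrecRel (fun n j : ℕ => 2 ^ j ≤ n) :=
    Primrec.nat_le.comp (hp.comp (Primrec.const 2) Primrec.snd) Primrec.fst
  exact Primrec.nat_findGreatest Primrec.id h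

theorem lgF_pow (j : ℕ) : lgF (2 ^ j) = j := by
  unfold lgF
  rw [Nat.findGreatest_eq_iff]
  refine ⟨Nat.lt_two_pow_self.le, fun _ => le_rfl, fun n hn _ => ?_⟩
  rw [Nat.pow_le_pow_iff_right (by norm_num)]
  omega

theorem exists_diag_code : ∃ c : Turing.ToPartrec.Code, ∀ j x, x ∈ diagF j →
    [x] ∈ c.eval [2 ^ j] := by
  have h : Partrec (fun n => diagF (lgF n)) := diagF_partrec.comp lgF_primrec.to_comp
  obtain ⟨c, hc⟩ := Turing.ToPartrec.Code.exists_code (Nat.Partrec'.part_iff₁.2 h)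
  refine ⟨c, fun j x hx => ?_⟩
  have := hc ⟨[2 ^ j], rfl⟩
  rw [show c.eval [2 ^ j] = _ from this]
  refine Part.mem_map _ ?_
  change x ∈ diagF (lgF (2 ^ j))
  rw [lgF_pow]
  exact hx

/-! ### Computability of the reduction -/

section
open Primrec

theorem cA_prim : Primrec cA :=
  Primrec.succ.comp (nat_mul.comp (const 2) Primrec.id)

theorem cB_prim : Primrec cB :=
  (nat_add.comp (nat_mul.comp (const 2) Primrec.id) (const 2))

theorem zP_prim : Primrec zP := nat_add.comp (const 4) (nat_mul.comp (const 3) Primrec.id)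
theorem zQ_prim : Primrec zQ := nat_add.comp (const 5) (nat_mul.comp (const 3) Primrec.id)
theorem zR_prim : Primrec zR := nat_add.comp (const 6) (nat_mul.comp (const 3) Primrec.id)

theorem sing_prim {α β : Type} [Primcodable α] [Primcodable β] {f : α → β} (hf : Primrec f) :
    Primrec (fun a => [f a]) := list_cons.comp hf (const [])

theorem dup_prim {α β : Type} [Primcodable α] [Primcodable β] {f g : α → β} (hf : Primrec f)
    (hg : Primrec g) : Primrec (fun a => [f a, g a]) := list_cons.comp hf (sing_prim hg)

section
variable {α : Type} [Primcodable α]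

theorem cFD_prim {z a b : α → ℕ} (hz : Primrec z) (ha : Primrec a) (hb : Primrec b) :
    Primrec (fun x => cFD (z x) (a x) (b x)) :=
  (sing_prim (cA_prim.comp hz)).pair ((sing_prim (cB_prim.comp hz)).pair
    (dup_prim (cA_prim.comp ha) (cA_prim.comp hb)))

theorem cIND_prim {a b : α → ℕ} (ha : Primrec a) (hb : Primrec b) :
    Primrec (fun x => cIND (a x) (b x)) :=
  (sing_prim (cA_prim.comp ha)).pair ((sing_prim (cA_prim.comp hb)).pair (const []))

theorem cREL_prim {t : α → ℕ × ℕ × ℕ} (ht : Primrec t) : Primrec (fun x => cREL (t x)) :=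
  cFD_prim (zQ_prim.comp (fst.comp ht)) (zP_prim.comp (snd.comp (snd.comp ht)))
    (zR_prim.comp (fst.comp (snd.comp ht)))

theorem restOf_prim {N i : α → ℕ} (hN : Primrec N) (hi : Primrec i) :
    Primrec (fun x => restOf (N x) (i x)) := by
  refine list_flatMap (list_range.comp hN) ?_
  have h : Primrec (fun p : α × ℕ => if p.2 = i p.1 then [] else [cA p.2, cB p.2]) :=
    Primrec.ite (Primrec.eq.comp snd (hi.comp fst)) (const [])
      (dup_prim (cA_prim.comp snd) (cB_prim.comp snd))
  exact (h.of_eq (fun p => by congr)).to₂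

theorem cCOPY_prim {N i : α → ℕ} (hN : Primrec N) (hi : Primrec i) :
    Primrec (fun x => cCOPY (N x) (i x)) :=
  dup_prim ((sing_prim (cA_prim.comp hi)).pair ((restOf_prim hN hi).pair
    (sing_prim (cB_prim.comp hi)))) ((sing_prim (cB_prim.comp hi)).pair ((restOf_prim hN hi).pair
    (sing_prim (cA_prim.comp hi))))

theorem cGEN_prim {g : α → ℕ} (hg : Primrec g) : Primrec (fun x => cGEN (g x)) := by
  have hP := zP_prim.comp hg
  have hQ := zQ_prim.comp hg
  have hR := zR_prim.comp hg
  exact list_cons.comp (cFD_prim hP (const 0) (const 1)) <|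
    list_cons.comp (cFD_prim (const 1) (const 0) hP) <|
    list_cons.comp (cIND_prim hP (const 0)) <|
    list_cons.comp (cFD_prim hQ (const 0) (const 2)) <|
    list_cons.comp (cFD_prim (const 2) (const 0) hQ) <|
    list_cons.comp (cIND_prim hQ (const 0)) <|
    list_cons.comp (cFD_prim hR (const 1) (const 2)) <|
    list_cons.comp (cFD_prim (const 2) (const 1) hR) <|
    list_cons.comp (cIND_prim hR (const 1)) <|
    dup_prim (cREL_prim (hg.pair (hg.pair (const 0)))) (cREL_prim (hg.pair ((const 0).pair hg)))

theorem cFIX_prim {u s : α → ℕ} (hu : Primrec u) (hs : Primrec s) :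
    Primrec (fun x => cFIX (u x) (s x)) :=
  list_cons.comp (const _) <| list_cons.comp (const _) <| list_cons.comp (const _) <|
    list_cons.comp (const _) <| list_cons.comp (const _) <| list_cons.comp (const _) <|
    list_cons.comp (cFD_prim (const 3) (zP_prim.comp hu) (zP_prim.comp hs)) <| const _

theorem cINST_prim {m u s : α → ℕ} {R : α → List (ℕ × ℕ × ℕ)} (hm : Primrec m) (hu : Primrec u)
    (hs : Primrec s) (hR : Primrec R) : Primrec (fun x => cINST (m x) (u x) (s x) (R x)) := by
  have hN : Primrec (fun x => 4 + 3 * m x) := nat_add.comp (const 4) (nat_mul.comp (const 3) hm)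
  refine (nat_mul.comp (const 2) hN).pair ((const _).pair ?_)
  refine list_append.comp (list_append.comp (list_append.comp (cFIX_prim hu hs) ?_) ?_) ?_
  · exact list_flatMap (list_range.comp hN) (cCOPY_prim (hN.comp fst) snd).to₂
  · exact list_flatMap (list_range.comp hm) (cGEN_prim snd).to₂
  · exact list_map hR (cREL_prim snd).to₂

theorem inst_prim (m0 : ℕ) (R0 : List (ℕ × ℕ × ℕ)) (ip : Turing.PartrecToTM2.K' ×
    Option Turing.PartrecToTM2.Γ' → ℕ) (f0 s : ℕ) :
    Primrec (fun j : ℕ => cINST (m0 + (j + 6) + 1) (m0 + (j + 6)) s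
        (R0 ++ chainR m0 f0 (fun i => ip (inW j i)) (j + 6))) := by
  have h6 : Primrec (fun j : ℕ => j + 6) := nat_add.comp Primrec.id (const 6)
  have hm : Primrec (fun j : ℕ => m0 + (j + 6)) := nat_add.comp (const m0) h6
  refine cINST_prim (Primrec.succ.comp hm) hm (const s) (list_append.comp (const R0) ?_)
  refine list_cons.comp (const _) (list_map (list_range.comp h6) ?_)
  have hmi : Primrec (fun p : ℕ × ℕ => m0 + p.2) := nat_add.comp (const m0) snd
  have hw : Primrec (fun p : ℕ × ℕ => ip (inW p.1 p.2)) := by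
    have h : Primrec (fun p : ℕ × ℕ => if p.2 < p.1 then ip (.main, some .bit0) else
        (tailW.map ip).getD (p.2 - p.1) (ip (.main, none))) :=
      Primrec.ite (nat_lt.comp snd fst) (const _)
        ((list_getD _).comp (const _) (nat_sub.comp snd fst))
    refine h.of_eq (fun p => ?_)
    unfold inW
    split_ifs
    · rfl
    · rw [List.getD_map]
  exact ((Primrec.succ.comp hmi).pair (hw.pair hmi)).to₂

end
end

/-- Theorem `undecide_ci`: the conditional independence implication
problem is undecidable: no computable function decides, for each valid instance, whether
the universally-quantified implication holds. -/
theorem undecidable_ci :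
    ¬ ∃ f : CIInstance → Bool, Computable f ∧
      ∀ inst : CIInstance, CIValid inst → (f inst = true ↔ CIHolds inst) := by
  rintro ⟨f, hf, hspec⟩
  obtain ⟨c, hc⟩ := exists_diag_code
  obtain ⟨m0, R0, ip, f0, s, H⟩ := code_inst c
  refine diagF_insep _ (hf.comp (inst_prim m0 R0 ip f0 s).to_comp) (fun n hn => ?_) (fun n hn => ?_)
  · obtain ⟨h1, h2, -⟩ := H n
    exact (hspec _ h1).2 (h2 (hc _ _ hn))
  · obtain ⟨h1, -, h3⟩ := H n
    have h := mt (hspec _ h1).1 (h3 (hc _ _ hn))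
    simpa using h

end
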